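/- Suppose φ satisfies the LSCC property and 1/(16ε) ≥ B. Then the infimum defining the value function V_ε(x) := inf_{u ∈ 𝒜_x^ε} I_ε[u] is attained for every x with V_ε(x) < ∞; the functional V_ε itself satisfies the LSCC property (in particular V_ε is σ-sequentially lower semicontinuous on d-bounded sets); and φ(x) ≥ V_ε(x) ≥ −Q(x) = −A − B d²(x,u_*) for every x ∈ X. -/

import Mathlib

/-!
The starting point is the Hardy inequality `∫ d²(u, u(0)) dμ_ε ≤ 4 ε² ∫ |u'|² dμ_ε` (`hardy`,
`IsMetricDerivOn.hardy`). Since `B ≤ 1/(16ε)`, half of the kinetic energy absorbs the quadratic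
lower bound of `φ` based at `u(0)`. Hence the energy of any admissible curve is at least `-Q(u(0))`,
and an energy bound controls the kinetic energy and the positive part of the potential energy
separately (`GoodCurve.bound`).

Everything else rests on one compactness statement, `LSCC.compactness`: admissible curves `u n` with
bounded initial points and energies at most `c n → c₀` subconverge pointwise in `σ` to an admissible
curve of energy at most `c₀`.

* Convergence. The kinetic bound makes the curves locally uniformly Hölder. By averaging, every time
  interval contains, for each curve, a time at which `φ` is bounded by a constant independent of the
  curve, so compactness of sublevels and a diagonal argument give σ-convergence at such times for all
  intervals `(i/(l+1), (i+1)/(l+1))`. Equicontinuity,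
  completeness and (MT2) extend the convergence to all times (`Compatible.exists_limit`).
* Regularity of the limit. By (MT1) the limit has the same Hölder and difference quotient bounds. It
  is in `AC²_loc`, with metric derivative the supremum of the derivatives of the distances to a
  countable dense subset of its trajectory (`exists_metricDeriv`).
* Lower semicontinuity. On bounded times `φ` is bounded below along the curves, and Fatou's lemma
  applies to the potential part and to difference quotients for the kinetic part. To discard the
  tail despite the sign of `φ`, the energy is split with the weight `min(1, e^{(t-R)/(4ε)})`, which
  grows slowly enough for a Hardy inequality with constant `8 ε²`; the tail energy is then at least
  `-q` times the mass of the tail, which tends to `0` as `R → ∞` (`GoodCurve.tail_neg_le`).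

Applied to a minimizing sequence, compactness gives attainment; applied to almost optimal curves
starting from `x n`, it gives lower semicontinuity of `V_ε` and σ-compactness of its sublevels on
bounded sets. Constant curves give `V_ε ≤ φ`, and `V_ε ≥ -Q` yields the coercivity of `V_ε` with
constant `2 * B`.
-/

open MeasureTheory Filter Topology Set ENNReal

noncomputable section

namespace WED

variable {X : Type*} [MetricSpace X]

/-- The exponential probability measure `μ_ε = ε⁻¹ e^{-t/ε} dt` on `(0,∞)`. -/
def expMeasure (ε : ℝ) : Measure ℝ :=
  (volume.restrict (Ioi (0:ℝ))).withDensity fun t => ENNReal.ofReal (ε⁻¹ * Real.exp (-t / ε))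

/-- The positive part of an extended real, as an extended nonnegative real. -/
def epos (x : EReal) : ℝ≥0∞ := if x = ⊤ then ⊤ else ENNReal.ofReal x.toReal

/-- The absolute value of an extended real, as an extended nonnegative real. -/
def eabs (x : EReal) : ℝ≥0∞ := epos x ⊔ epos (-x)

/-- The (extended-real valued) integral of an extended-real valued function, defined as the
difference between the integrals of the positive and of the negative part. -/
def eIntegral (μ : Measure ℝ) (f : ℝ → EReal) : EReal :=
  ((∫⁻ t, epos (f t) ∂μ : ℝ≥0∞) : EReal) - ((∫⁻ t, epos (-f t) ∂μ : ℝ≥0∞) : EReal)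

/-- `m` is *the* metric derivative of the curve `u` on the set `I ⊆ ℝ`:  `m` is a nonnegative
locally integrable function, `d(u s, u t) ≤ ∫_s^t m` (so that `u` is absolutely continuous),
and `m t` is the limit of the difference quotients `d(u s, u t)/|s-t|` at a.e. `t ∈ I`. -/
structure IsMetricDerivOn (u : ℝ → X) (m : ℝ → ℝ) (I : Set ℝ) : Prop where
  nonneg : ∀ t, 0 ≤ m t
  locInt : ∀ s ∈ I, ∀ t ∈ I, IntegrableOn m (Icc s t) volume
  dist_le : ∀ s ∈ I, ∀ t ∈ I, s ≤ t → dist (u s) (u t) ≤ ∫ r in Icc s t, m r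
  limit : ∀ᵐ t ∂(volume.restrict I),
    Tendsto (fun s => dist (u s) (u t) / |s - t|) (𝓝[I \ {t}] t) (𝓝 (m t))

/-- `u ∈ AC²_loc(I; X)`, with metric derivative `m`. -/
def AC2LocOn (u : ℝ → X) (m : ℝ → ℝ) (I : Set ℝ) : Prop :=
  IsMetricDerivOn u m I ∧ ∀ s ∈ I, ∀ t ∈ I, IntegrableOn (fun r => m r ^ 2) (Icc s t) volume

/-- `u ∈ AC²(I; X)`, with metric derivative `m`. -/
def AC2On (u : ℝ → X) (m : ℝ → ℝ) (I : Set ℝ) : Prop :=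
  IsMetricDerivOn u m I ∧ IntegrableOn (fun r => m r ^ 2) I volume

/-- The integrand `(ε/2)|u'|²(t) + φ(u(t))` of the WED functional. -/
def wedIntegrand (φ : X → EReal) (ε : ℝ) (u : ℝ → X) (m : ℝ → ℝ) (t : ℝ) : EReal :=
  ((ε / 2 * m t ^ 2 : ℝ) : EReal) + φ (u t)

/-- The WED functional `I_ε[u] = ∫₀^∞ ((ε/2)|u'|² + φ(u)) dμ_ε`. -/
def WEDfun (φ : X → EReal) (ε : ℝ) (u : ℝ → X) (m : ℝ → ℝ) : EReal :=
  eIntegral (expMeasure ε) (wedIntegrand φ ε u m)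

/-- The admissible class `𝒜_x^ε`: curves `u ∈ AC²_loc([0,∞);X)` (with metric derivative `m`)
with `u 0 = x` and `∫₀^∞ |u'|² dμ_ε < ∞`. -/
def Admissible (ε : ℝ) (x : X) (u : ℝ → X) (m : ℝ → ℝ) : Prop :=
  u 0 = x ∧ AC2LocOn u m (Ici 0) ∧
    (∫⁻ t, ENNReal.ofReal (m t ^ 2) ∂expMeasure ε) < ⊤

/-- The value function `V_ε(x) = inf { I_ε[u] : u ∈ 𝒜_x^ε }`. -/
def Veps (φ : X → EReal) (ε : ℝ) (x : X) : EReal :=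
  ⨅ (p : {p : (ℝ → X) × (ℝ → ℝ) // Admissible ε x p.1 p.2}),
    WEDfun φ ε p.1.1 p.1.2

/-- `u` (with metric derivative `m`) minimizes the WED functional `I_ε` over `𝒜_x^ε`. -/
def IsMinimizer (φ : X → EReal) (ε : ℝ) (x : X) (u : ℝ → X) (m : ℝ → ℝ) : Prop :=
  Admissible ε x u m ∧
    ∀ v n, Admissible ε x v n → WEDfun φ ε u m ≤ WEDfun φ ε v n

/-- The compatibility conditions (MT1), (MT2) between the distance `d` and the auxiliary
topology `σ`. -/
structure Compatible (σ : TopologicalSpace X) : Prop where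
  mt1 : ∀ (u v : ℕ → X) (x y : X), Tendsto u atTop (@nhds X σ x) →
    Tendsto v atTop (@nhds X σ y) →
    ENNReal.ofReal (dist x y) ≤ Filter.liminf (fun n => ENNReal.ofReal (dist (u n) (v n))) atTop
  mt2 : ∀ U : Set X, IsOpen[σ] U → ∀ x ∈ U, ∃ V : Set X, IsOpen[σ] V ∧ x ∈ V ∧
    ∃ δ : ℝ, 0 < δ ∧ ∀ y : X, Metric.infDist y V < δ → y ∈ U

/-- The standard lower semicontinuity–compactness–coercivity (LSCC) assumptions on a proper
functional `φ : X → (-∞,∞]`, with respect to the auxiliary topology `σ`. -/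
structure LSCC (σ : TopologicalSpace X) (φ : X → EReal) (ustar : X) (A B : ℝ) : Prop where
  hA : 0 ≤ A
  hB : 0 ≤ B
  proper : ∃ x, φ x ≠ ⊤
  ne_bot : ∀ x, φ x ≠ ⊥
  lsc : ∀ (u : ℕ → X) (x : X), (∃ C : ℝ, ∀ n k, dist (u n) (u k) ≤ C) →
    Tendsto u atTop (@nhds X σ x) → φ x ≤ Filter.liminf (fun n => φ (u n)) atTop
  cpt : ∀ u : ℕ → X, (∃ C : ℝ, ∀ n, φ (u n) ≤ (C : EReal)) →
    (∃ C : ℝ, ∀ n k, dist (u n) (u k) ≤ C) →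
    ∃ (x : X) (j : ℕ → ℕ), StrictMono j ∧ Tendsto (u ∘ j) atTop (@nhds X σ x)
  coercive : ∀ u v : X, ((-(B * dist u v ^ 2 + (B * dist v ustar ^ 2 + A)) : ℝ) : EReal) ≤ φ u

/-- The local (descending) slope `|∂φ|(x) = limsup_{v→x} (φ(x)-φ(v))⁺/d(x,v)`. -/
def slope (φ : X → EReal) (x : X) : ℝ≥0∞ :=
  Filter.limsup (fun v => epos (φ x - φ v) / ENNReal.ofReal (dist x v)) (𝓝[≠] x)

/-- The relaxed slope `|∂⁻φ|`: the σ-sequential lower semicontinuous envelope of the local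
slope along `d`-bounded sequences with bounded energy. -/
def relaxedSlope (σ : TopologicalSpace X) (φ : X → EReal) (x : X) : ℝ≥0∞ :=
  ⨅ (u : ℕ → X) (_ : Tendsto u atTop (@nhds X σ x))
    (_ : ∃ C : ℝ, ∀ n, dist (u n) x ≤ C ∧ φ (u n) ≤ (C : EReal)),
    Filter.liminf (fun n => slope φ (u n)) atTop

/-- `G_ε(x) = sqrt(2(φ(x) - V_ε(x))/ε)` if `V_ε(x) < ∞`, and `∞` otherwise. -/
def Geps (φ : X → EReal) (ε : ℝ) (x : X) : ℝ≥0∞ :=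
  if Veps φ ε x = ⊤ then ⊤
  else (2 * epos (φ x - Veps φ ε x) / ENNReal.ofReal ε) ^ (1/2 : ℝ)

/-- The measure `|u'| dt` on `I` associated with the speed `m` of a curve. -/
def speedMeasure (m : ℝ → ℝ) (I : Set ℝ) : Measure ℝ :=
  (volume.restrict I).withDensity fun t => ENNReal.ofReal (m t)

/-- Membership in `L^p(μ)`, `p ∈ [1,∞]`, for an `ℝ≥0∞`-valued function. -/
def MemLpENN (f : ℝ → ℝ≥0∞) (p : ℝ≥0∞) (μ : Measure ℝ) : Prop :=
  if p = ⊤ then ∃ C : ℝ≥0∞, C ≠ ⊤ ∧ ∀ᵐ t ∂μ, f t ≤ C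
  else (∫⁻ t, f t ^ p.toReal ∂μ) < ⊤

/-- `g` is an `L^p`-moderated upper gradient for `φ`: for every absolutely continuous curve
`u` (with metric derivative `m`) on a compact interval such that `φ∘u ∈ L^p(|u'|dt)` and
`g∘u ∈ L¹(|u'|dt)`, one has `|φ(u t) - φ(u s)| ≤ ∫_s^t g(u r) |u'|(r) dr`. -/
def IsModeratedUpperGradient (φ : X → EReal) (g : X → ℝ≥0∞) (p : ℝ≥0∞) : Prop :=
  ∀ (a b : ℝ), a ≤ b → ∀ (u : ℝ → X) (m : ℝ → ℝ), IsMetricDerivOn u m (Icc a b) →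
    MemLpENN (fun t => eabs (φ (u t))) p (speedMeasure m (Icc a b)) →
    (∫⁻ t in Icc a b, g (u t) * ENNReal.ofReal (m t)) < ⊤ →
    ∀ s ∈ Icc a b, ∀ t ∈ Icc a b, s ≤ t →
      (φ (u t) ≤ φ (u s) + ((∫⁻ r in Icc s t, g (u r) * ENNReal.ofReal (m r) : ℝ≥0∞) : EReal) ∧
       φ (u s) ≤ φ (u t) + ((∫⁻ r in Icc s t, g (u r) * ENNReal.ofReal (m r) : ℝ≥0∞) : EReal))

/-- A real function `f` is locally absolutely continuous on `[0,∞)` with density `g`. -/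
def RealACLoc (f g : ℝ → ℝ) : Prop :=
  (∀ b : ℝ, 0 ≤ b → IntegrableOn g (Icc 0 b) volume) ∧
  ∀ t : ℝ, 0 ≤ t → f t = f 0 + ∫ r in Icc 0 t, g r

/-- A real function `f` belongs to `AC²_loc([0,∞);ℝ)`, with derivative `g`. -/
def RealAC2Loc (f g : ℝ → ℝ) : Prop :=
  RealACLoc f g ∧ ∀ b : ℝ, 0 ≤ b → IntegrableOn (fun t => g t ^ 2) (Icc 0 b) volume

/-- The compact-open topology on curves `[0,∞) → X` induced by the auxiliary topology `σ`. -/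
def compactOpenOf (σ : TopologicalSpace X) : TopologicalSpace (ℝ → X) :=
  TopologicalSpace.generateFrom
    {S | ∃ (K : Set ℝ) (U : Set X), K ⊆ Ici 0 ∧ IsCompact K ∧ IsOpen[σ] U ∧
      S = {f : ℝ → X | MapsTo f K U}}

/-- The WED slope `|∂_w φ|(x) = limsup_{ε↓0} G_ε(x)`. -/
def wedSlope (φ : X → EReal) (x : X) : ℝ≥0∞ :=
  Filter.limsup (fun ε => Geps φ ε x) (𝓝[>] (0:ℝ))

/-- The relaxed WED slope `|∂_w^- φ|`. -/
def relaxedWedSlope (σ : TopologicalSpace X) (φ : X → EReal) (x : X) : ℝ≥0∞ :=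
  ⨅ (u : ℕ → X) (_ : Tendsto u atTop (@nhds X σ x))
    (_ : ∃ C : ℝ, ∀ n, dist (u n) x ≤ C ∧ φ (u n) ≤ (C : EReal)),
    Filter.liminf (fun n => wedSlope φ (u n)) atTop

/-- The φ-conditioned local slope `|∂̃ψ|(x) = limsup_{v→x, φ(v)→φ(x)} (ψ(x)-ψ(v))⁺/d(x,v)`. -/
def condSlope (φ ψ : X → EReal) (x : X) : ℝ≥0∞ :=
  Filter.limsup (fun v => epos (ψ x - ψ v) / ENNReal.ofReal (dist x v))
    ((𝓝[≠] x) ⊓ Filter.comap φ (𝓝 (φ x)))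

/-- `φ` is geodesically `λ`-convex: every pair of points of `D(φ)` is joined by a
constant-speed geodesic along which `φ` is `λ`-convex. -/
def GeodesicLambdaConvex (φ : X → EReal) (lam : ℝ) : Prop :=
  ∀ v₀ v₁ : X, φ v₀ ≠ ⊤ → φ v₁ ≠ ⊤ → ∃ γ : ℝ → X, γ 0 = v₀ ∧ γ 1 = v₁ ∧
    (∀ s ∈ Icc (0:ℝ) 1, ∀ t ∈ Icc (0:ℝ) 1, dist (γ s) (γ t) = |t - s| * dist v₀ v₁) ∧
    ∀ t ∈ Icc (0:ℝ) 1, φ (γ t) ≤ ((1 - t : ℝ) : EReal) * φ v₀ + ((t : ℝ) : EReal) * φ v₁ -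
      ((lam / 2 * t * (1 - t) * dist v₀ v₁ ^ 2 : ℝ) : EReal)

end WED

namespace WED

/-! ### The auxiliary topology -/

section Sigma

variable {X : Type*} [MetricSpace X] {σ : TopologicalSpace X}

lemma Compatible.eventually_dist_le (hc : Compatible σ) {u v : ℕ → X} {x y : X}
    (hu : Tendsto u atTop (@nhds X σ x)) (hv : Tendsto v atTop (@nhds X σ y))
    {η : ℝ} (hη : 0 < η) : ∀ᶠ n in atTop, dist x y ≤ dist (u n) (v n) + η := by
  by_cases h0 : dist x y < η
  · filter_upwards with n
    have := dist_nonneg (x := u n) (y := v n)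
    linarith
  have h1 : ENNReal.ofReal (dist x y - η) <
      Filter.liminf (fun n => ENNReal.ofReal (dist (u n) (v n))) atTop := by
    refine lt_of_lt_of_le ?_ (hc.mt1 u v x y hu hv)
    rw [ENNReal.ofReal_lt_ofReal_iff (by linarith)]
    linarith
  filter_upwards [eventually_lt_of_lt_liminf h1] with n hn
  have := (ENNReal.ofReal_lt_ofReal_iff_of_nonneg (by linarith)).1 hn
  linarith

lemma Compatible.dist_le_of_forall (hc : Compatible σ) {u v : ℕ → X} {x y : X}
    (hu : Tendsto u atTop (@nhds X σ x)) (hv : Tendsto v atTop (@nhds X σ y))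
    {C : ℝ} (hC : ∀ n, dist (u n) (v n) ≤ C) : dist x y ≤ C := by
  refine le_of_forall_pos_le_add fun η hη => ?_
  obtain ⟨n, hn⟩ := (hc.eventually_dist_le hu hv hη).exists
  linarith [hC n]

lemma Compatible.unique (hc : Compatible σ) {u : ℕ → X} {x y : X}
    (hu : Tendsto u atTop (@nhds X σ x)) (hv : Tendsto u atTop (@nhds X σ y)) : x = y :=
  dist_le_zero.1 (hc.dist_le_of_forall hu hv (C := 0) (by simp))

/-- By (MT2), a sequence that is eventually within each prescribed distance of every σ-open
neighbourhood of `x` converges to `x` in `σ`. -/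
lemma Compatible.tendsto_of_near (hc : Compatible σ) {u : ℕ → X} {x : X}
    (h : ∀ V : Set X, IsOpen[σ] V → x ∈ V → ∀ δ > 0, ∀ᶠ n in atTop, ∃ z ∈ V, dist (u n) z < δ) :
    Tendsto u atTop (@nhds X σ x) := by
  rw [tendsto_nhds]
  intro U hU hx
  obtain ⟨V, hV, hxV, δ, hδ, hVU⟩ := hc.mt2 U hU x hx
  filter_upwards [h V hV hxV δ hδ] with n ⟨z, hz, hd⟩
  exact hVU _ (lt_of_le_of_lt (Metric.infDist_le_dist_of_mem hz) hd)

lemma Compatible.tendsto_of_dist (hc : Compatible σ) {u : ℕ → X} {x : X}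
    (hu : Tendsto (fun n => dist (u n) x) atTop (𝓝 0)) : Tendsto u atTop (@nhds X σ x) := by
  refine hc.tendsto_of_near fun V _ hxV δ hδ => ?_
  filter_upwards [hu.eventually_lt_const hδ] with n hn
  exact ⟨x, hxV, hn⟩

/-- A sequence which is `d`-uniformly approximated, with arbitrary precision, by σ-convergent
sequences is itself σ-convergent; the limit is the `d`-limit of the approximate limits. -/
lemma Compatible.exists_tendsto_of_approx [CompleteSpace X] (hc : Compatible σ) {z : ℕ → X}
    (h : ∀ r > 0, ∃ (y : ℕ → X) (a : X), Tendsto y atTop (@nhds X σ a) ∧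
      ∀ n, dist (z n) (y n) ≤ r) :
    ∃ a, Tendsto z atTop (@nhds X σ a) := by
  choose y a ha hy using fun k : ℕ => h (1 / ((k : ℝ) + 1)) (by positivity)
  have hlim := tendsto_one_div_add_atTop_nhds_zero_nat (𝕜 := ℝ)
  have hd : ∀ k l : ℕ, dist (a k) (a l) ≤ 1 / ((k : ℝ) + 1) + 1 / ((l : ℝ) + 1) := by
    intro k l
    refine hc.dist_le_of_forall (ha k) (ha l) fun n => ?_
    calc dist (y k n) (y l n) ≤ dist (y k n) (z n) + dist (z n) (y l n) := dist_triangle _ _ _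
      _ ≤ _ := add_le_add (by rw [dist_comm]; exact hy k n) (hy l n)
  have hcau : CauchySeq a := by
    refine cauchySeq_of_le_tendsto_0 (fun N : ℕ => 1 / ((N : ℝ) + 1) + 1 / ((N : ℝ) + 1)) ?_ ?_
    · intro n m N hn hm
      refine (hd n m).trans (add_le_add ?_ ?_) <;> gcongr
    · simpa using hlim.add hlim
  obtain ⟨b, hb⟩ := cauchySeq_tendsto_of_complete hcau
  refine ⟨b, hc.tendsto_of_near fun V hV hbV δ hδ => ?_⟩
  have h1 : ∀ᶠ k in atTop, a k ∈ V :=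
    tendsto_nhds.1 (hc.tendsto_of_dist (tendsto_iff_dist_tendsto_zero.1 hb)) V hV hbV
  obtain ⟨k, hkV, hkδ⟩ := (h1.and (hlim.eventually_lt_const hδ)).exists
  have h2 : ∀ᶠ n in atTop, y k n ∈ V := tendsto_nhds.1 (ha k) V hV hkV
  filter_upwards [h2] with n hn
  exact ⟨_, hn, (hy k n).trans_lt hkδ⟩

end Sigma

/-- Diagonal extraction for countably many sequences, each of which has a convergent
subsequence along every subsequence. -/
lemma exists_diagonal {X : Type*} {σ : TopologicalSpace X} (y : ℕ → ℕ → X)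
    (h : ∀ k, ∀ j : ℕ → ℕ, StrictMono j → ∃ (x : X) (l : ℕ → ℕ), StrictMono l ∧
      Tendsto (fun n => y k (j (l n))) atTop (@nhds X σ x)) :
    ∃ j : ℕ → ℕ, StrictMono j ∧ ∀ k, ∃ x, Tendsto (fun n => y k (j n)) atTop (@nhds X σ x) := by
  choose x l hl hx using h
  -- `J k` is the `k`-th nested subsequence, `J (k+1) = J k ∘ l k _ _`.
  let step : ℕ → {j : ℕ → ℕ // StrictMono j} → {j : ℕ → ℕ // StrictMono j} :=
    fun k j => ⟨j.1 ∘ l k j.1 j.2, j.2.comp (hl k j.1 j.2)⟩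
  let J : ℕ → {j : ℕ → ℕ // StrictMono j} := fun k => Nat.rec ⟨id, strictMono_id⟩ step k
  have hJ : ∀ k, (J (k+1)).1 = (J k).1 ∘ l k (J k).1 (J k).2 := fun k => rfl
  have hnest : ∀ k i, ∃ p : ℕ → ℕ, StrictMono p ∧ (J (k + i)).1 = (J k).1 ∘ p := by
    intro k i
    induction i with
    | zero => exact ⟨id, strictMono_id, rfl⟩
    | succ i ih =>
      obtain ⟨p, hp, he⟩ := ih
      refine ⟨p ∘ l (k+i) (J (k+i)).1 (J (k+i)).2, hp.comp (hl _ _ _), ?_⟩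
      rw [← add_assoc, hJ, ← Function.comp_assoc, ← he]
  refine ⟨fun n => (J n).1 n, ?_, fun k => ⟨x k (J k).1 (J k).2, ?_⟩⟩
  · refine strictMono_nat_of_lt_succ fun n => ?_
    rw [hJ]
    exact (J n).2 (lt_of_lt_of_le (Nat.lt_succ_self n) ((hl n _ _).id_le _))
  · have hk := hx k (J k).1 (J k).2
    choose p hp he using fun i => hnest (k+1) i
    have hq : Tendsto (fun i => p i (k + 1 + i)) atTop atTop :=
      tendsto_atTop_mono (fun i => (Nat.le_add_left i (k+1)).trans ((hp i).id_le _)) tendsto_id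
    have := hk.comp hq
    rw [← tendsto_add_atTop_iff_nat (k+1)]
    refine this.congr fun i => ?_
    have e : i + (k+1) = k + 1 + i := by omega
    simp only [Function.comp, e]
    rw [he i, hJ]; rfl

end WED

namespace WED

/-! ### Weighted inequalities for the exponential measure -/

lemma lintegral_expMeasure (ε : ℝ) (f : ℝ → ℝ≥0∞) :
    ∫⁻ t, f t ∂expMeasure ε =
      ∫⁻ t in Ioi 0, ENNReal.ofReal (ε⁻¹ * Real.exp (-t / ε)) * f t := by
  unfold expMeasure
  rw [lintegral_withDensity_eq_lintegral_mul_non_measurable _ (by fun_prop) (by simp)]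
  rfl

lemma expMeasure_absolutelyContinuous (ε : ℝ) : expMeasure ε ≪ volume.restrict (Ioi 0) :=
  withDensity_absolutelyContinuous _ _

lemma absolutelyContinuous_expMeasure {ε : ℝ} (hε : 0 < ε) :
    volume.restrict (Ioi 0) ≪ expMeasure ε := by
  refine withDensity_absolutelyContinuous' (by fun_prop) ?_
  filter_upwards with t
  have : 0 < ε⁻¹ * Real.exp (-t / ε) := by positivity
  simp [this]

lemma lintegral_exp_Ioi {b : ℝ} (hb : 0 < b) (c : ℝ) :
    ∫⁻ t in Ioi c, ENNReal.ofReal (Real.exp (-b * t)) = ENNReal.ofReal (Real.exp (-b * c) / b) := by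
  rw [← ofReal_integral_eq_lintegral_ofReal (integrableOn_exp_mul_Ioi (by linarith) c)
    (by filter_upwards with t; positivity), integral_exp_mul_Ioi (by linarith)]
  congr 1
  field_simp

lemma isProbabilityMeasure_expMeasure {ε : ℝ} (hε : 0 < ε) :
    IsProbabilityMeasure (expMeasure ε) := by
  constructor
  rw [← setLIntegral_one, Measure.restrict_univ, lintegral_expMeasure]
  simp only [mul_one]
  simp_rw [ENNReal.ofReal_mul (inv_nonneg.2 hε.le)]
  rw [lintegral_const_mul _ (by fun_prop)]
  have := lintegral_exp_Ioi (inv_pos.2 hε) 0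
  simp only [mul_zero, Real.exp_zero] at this
  have e : ∀ t : ℝ, -t / ε = -ε⁻¹ * t := fun t => by ring
  simp_rw [e]
  rw [this, ← ENNReal.ofReal_mul (by positivity)]
  rw [show ε⁻¹ * (1 / ε⁻¹) = 1 by field_simp]
  simp

/-- Cauchy–Schwarz with a positive weight `g`. -/
lemma sq_lintegral_le {μ : Measure ℝ} {m g : ℝ → ℝ} (hm : AEMeasurable m μ)
    (hg : AEMeasurable g μ) (hm0 : ∀ t, 0 ≤ m t) (hg0 : ∀ t, 0 < g t) :
    (∫⁻ t, ENNReal.ofReal (m t) ∂μ) ^ 2 ≤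
      (∫⁻ t, ENNReal.ofReal (m t ^ 2) * ENNReal.ofReal (g t) ∂μ) *
        ∫⁻ t, ENNReal.ofReal (g t)⁻¹ ∂μ := by
  have h := ENNReal.lintegral_mul_le_Lp_mul_Lq μ Real.HolderConjugate.two_two
    (f := fun t => ENNReal.ofReal (m t * √(g t))) (g := fun t => ENNReal.ofReal (√(g t))⁻¹)
    (by fun_prop) (by fun_prop)
  have e1 : ∀ t, ENNReal.ofReal (m t * √(g t)) * ENNReal.ofReal (√(g t))⁻¹ =
      ENNReal.ofReal (m t) := by
    intro t
    have : 0 < √(g t) := Real.sqrt_pos.2 (hg0 t)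
    have := hm0 t
    rw [← ENNReal.ofReal_mul (by positivity)]
    congr 1; field_simp
  have e2 : ∀ t, ENNReal.ofReal (m t * √(g t)) ^ (2:ℝ) =
      ENNReal.ofReal (m t ^ 2) * ENNReal.ofReal (g t) := by
    intro t
    have := hm0 t
    rw [ENNReal.rpow_two, ← ENNReal.ofReal_pow (by positivity), mul_pow,
      Real.sq_sqrt (hg0 t).le, ENNReal.ofReal_mul (by positivity)]
  have e3 : ∀ t, ENNReal.ofReal (√(g t))⁻¹ ^ (2:ℝ) = ENNReal.ofReal (g t)⁻¹ := by
    intro t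
    rw [ENNReal.rpow_two, ← ENNReal.ofReal_pow (by positivity), inv_pow, Real.sq_sqrt (hg0 t).le]
  simp only [Pi.mul_apply, e1, e2, e3] at h
  calc _ ≤ _ := pow_le_pow_left' h 2
    _ = _ := by
      rw [mul_pow, ← ENNReal.rpow_two, ← ENNReal.rpow_two, ← ENNReal.rpow_mul, ← ENNReal.rpow_mul]
      norm_num

/-- Weighted Hardy inequality. It is obtained from Tonelli's theorem, the kernel
`e^{at} e^{-ar}` with `a = 1/(2ε)` being the optimal one. The weight `θ` may grow at most like
`e^{lam t}`. -/
lemma hardy {ε lam a : ℝ} (hε : 0 < ε) (ha : a = 1 / (2 * ε)) (hlam : lam < a)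
    {θ ρ δ : ℝ → ℝ≥0∞} (hθm : Measurable θ)
    (hθ : ∀ s t, 0 < s → s ≤ t → θ t ≤ θ s * ENNReal.ofReal (Real.exp (lam * (t - s))))
    (hρ : AEMeasurable ρ (volume.restrict (Ioi 0)))
    (hδ : ∀ t, 0 < t → δ t ≤ ENNReal.ofReal (Real.exp (a * t) / a) *
      ∫⁻ r in Ioc 0 t, ρ r * ENNReal.ofReal (Real.exp (-a * r))) :
    ∫⁻ t, δ t * θ t ∂expMeasure ε ≤
      ENNReal.ofReal (1 / (a * (a - lam))) * ∫⁻ t, ρ t * θ t ∂expMeasure ε := by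
  wlog hρm : Measurable ρ generalizing ρ
  · have hae := hρ.ae_eq_mk
    have h1 := this (ρ := hρ.mk ρ) hρ.measurable_mk.aemeasurable ?_ hρ.measurable_mk
    · refine h1.trans_eq ?_
      congr 1
      refine lintegral_congr_ae ?_
      filter_upwards [(expMeasure_absolutelyContinuous ε).ae_le hae] with t ht
      rw [ht]
    · intro t ht
      refine (hδ t ht).trans_eq ?_
      congr 1
      refine lintegral_congr_ae ?_
      filter_upwards [ae_mono (Measure.restrict_mono_set volume
        (fun x (hx : x ∈ Ioc 0 t) => hx.1)) hae] with r hr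
      rw [hr]
  have ha0 : 0 < a := by rw [ha]; positivity
  have hal : 0 < a - lam := by linarith
  rw [lintegral_expMeasure, lintegral_expMeasure, ← lintegral_const_mul _ (by fun_prop)]
  let K : ℝ → ℝ → ℝ≥0∞ := fun t r => (Ici r).indicator (fun t =>
    ρ r * θ r * ENNReal.ofReal (ε⁻¹ * Real.exp (-r / ε) / a * Real.exp ((a - lam) * r)) *
      ENNReal.ofReal (Real.exp (-(a - lam) * t))) t
  have hK : Measurable (Function.uncurry K) := by
    have : Function.uncurry K = {p : ℝ × ℝ | p.2 ≤ p.1}.indicator (fun p =>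
      ρ p.2 * θ p.2 * ENNReal.ofReal (ε⁻¹ * Real.exp (-p.2 / ε) / a * Real.exp ((a - lam) * p.2)) *
      ENNReal.ofReal (Real.exp (-(a - lam) * p.1))) := by
      ext p
      simp [K, Function.uncurry, indicator]
    rw [this]
    exact Measurable.indicator (by fun_prop) (measurableSet_le (by fun_prop) (by fun_prop))
  calc _ ≤ ∫⁻ t in Ioi 0, ∫⁻ r in Ioi 0, K t r := by
        refine setLIntegral_mono' measurableSet_Ioi fun t ht => ?_
        have ht' : 0 < t := ht
        calc _ ≤ ENNReal.ofReal (ε⁻¹ * Real.exp (-t / ε)) *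
              ((ENNReal.ofReal (Real.exp (a * t) / a) *
              ∫⁻ r in Ioc 0 t, ρ r * ENNReal.ofReal (Real.exp (-a * r))) * θ t) := by
              gcongr; exact hδ t ht
          _ = ∫⁻ r in Ioc 0 t, ENNReal.ofReal (ε⁻¹ * Real.exp (-t / ε)) *
              ENNReal.ofReal (Real.exp (a * t) / a) * θ t *
               (ρ r * ENNReal.ofReal (Real.exp (-a * r))) := by
              rw [lintegral_const_mul _ (by fun_prop)]; ring
          _ ≤ ∫⁻ r in Ioc 0 t, K t r := by
              refine setLIntegral_mono' measurableSet_Ioc fun r hr => ?_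
              have hmem : t ∈ Ici r := hr.2
              simp only [K, indicator_of_mem hmem]
              calc _ ≤ ENNReal.ofReal (ε⁻¹ * Real.exp (-t / ε)) *
                  ENNReal.ofReal (Real.exp (a * t) / a) *
                  (θ r * ENNReal.ofReal (Real.exp (lam * (t - r)))) *
                  (ρ r * ENNReal.ofReal (Real.exp (-a * r))) := by
                    gcongr; exact hθ r t hr.1 hr.2
                _ = ρ r * θ r * (ENNReal.ofReal (ε⁻¹ * Real.exp (-t / ε)) *
                  ENNReal.ofReal (Real.exp (a * t) / a) *
                  ENNReal.ofReal (Real.exp (lam * (t - r))) *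
                  ENNReal.ofReal (Real.exp (-a * r))) := by ring
                _ = _ := by
                  rw [mul_assoc (ρ r * θ r)]
                  congr 1
                  rw [← ENNReal.ofReal_mul (by positivity), ← ENNReal.ofReal_mul (by positivity),
                    ← ENNReal.ofReal_mul (by positivity), ← ENNReal.ofReal_mul (by positivity)]
                  congr 1
                  have e : ∀ p q r' s' : ℝ, ε⁻¹ * Real.exp p * (Real.exp q / a) * Real.exp r' *
                    Real.exp s' = ε⁻¹ / a * Real.exp (p + q + r' + s') := by
                    intro p q r' s'; simp only [Real.exp_add]; ring
                  have e' : ∀ p q r' : ℝ, ε⁻¹ * Real.exp p / a * Real.exp q * Real.exp r'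
                    = ε⁻¹ / a * Real.exp (p + q + r') := by
                    intro p q r'; simp only [Real.exp_add]; ring
                  rw [e, e']
                  congr 2
                  rw [ha]; field_simp; ring
          _ ≤ _ := lintegral_mono_set (fun r hr => hr.1)
    _ = ∫⁻ r in Ioi 0, ∫⁻ t in Ioi 0, K t r := lintegral_lintegral_swap hK.aemeasurable
    _ ≤ _ := by
        refine setLIntegral_mono' measurableSet_Ioi fun r hr => ?_
        calc _ ≤ ∫⁻ t, K t r := setLIntegral_le_lintegral _ _
          _ = ∫⁻ t in Ioi r, ρ r * θ r *
              ENNReal.ofReal (ε⁻¹ * Real.exp (-r / ε) / a * Real.exp ((a - lam) * r)) *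
              ENNReal.ofReal (Real.exp (-(a - lam) * t)) := by
              rw [lintegral_indicator measurableSet_Ici, restrict_Ioi_eq_restrict_Ici]
          _ = ρ r * θ r *
              ENNReal.ofReal (ε⁻¹ * Real.exp (-r / ε) / a * Real.exp ((a - lam) * r)) *
              ENNReal.ofReal (Real.exp (-(a - lam) * r) / (a - lam)) := by
              rw [lintegral_const_mul _ (by fun_prop), lintegral_exp_Ioi hal]
          _ = ρ r * θ r * (ENNReal.ofReal (1 / (a * (a - lam))) *
              ENNReal.ofReal (ε⁻¹ * Real.exp (-r / ε))) := by
              rw [mul_assoc (ρ r * θ r)]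
              congr 1
              rw [← ENNReal.ofReal_mul (by positivity), ← ENNReal.ofReal_mul (by positivity)]
              congr 1
              have : Real.exp ((a - lam) * r) * Real.exp (-(a - lam) * r) = 1 := by
                rw [← Real.exp_add, show (a - lam) * r + -(a - lam) * r = 0 by ring, Real.exp_zero]
              calc _ = ε⁻¹ * Real.exp (-r / ε) / a / (a - lam) *
                  (Real.exp ((a - lam) * r) * Real.exp (-(a - lam) * r)) := by ring
                _ = _ := by rw [this]; field_simp
          _ = _ := by ring

end WED

namespace WED

/-! ### Estimates along a single curve -/

section Curve

variable {X : Type*} [MetricSpace X] {u : ℝ → X} {m : ℝ → ℝ}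

lemma IsMetricDerivOn.aemeasurable (h : IsMetricDerivOn u m (Ici 0)) :
    AEMeasurable m (volume.restrict (Ioi 0)) := by
  have h1 : AEMeasurable m (volume.restrict (⋃ n : ℕ, Icc (0:ℝ) n)) := by
    rw [aemeasurable_iUnion_iff]
    exact fun n => (h.locInt 0 self_mem_Ici n (mem_Ici.2 n.cast_nonneg)).aemeasurable
  refine h1.mono_measure (Measure.restrict_mono_set _ fun t ht => ?_)
  obtain ⟨n, hn⟩ := exists_nat_ge t
  exact mem_iUnion.2 ⟨n, (le_of_lt ht), hn⟩

lemma IsMetricDerivOn.ofReal_dist_sq_le (h : IsMetricDerivOn u m (Ici 0)) {s t : ℝ}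
    (hs : 0 ≤ s) (hst : s ≤ t) {g : ℝ → ℝ} (hg : Measurable g) (hg0 : ∀ r, 0 < g r) :
    ENNReal.ofReal (dist (u s) (u t) ^ 2) ≤
      (∫⁻ r in Ioc s t, ENNReal.ofReal (m r ^ 2) * ENNReal.ofReal (g r)) *
        ∫⁻ r in Ioc s t, ENNReal.ofReal (g r)⁻¹ := by
  have hmInt := (h.locInt s hs t (hs.trans hst)).mono_set Ioc_subset_Icc_self
  have h1 : ENNReal.ofReal (dist (u s) (u t)) ≤ ∫⁻ r in Ioc s t, ENNReal.ofReal (m r) := by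
    rw [← ofReal_integral_eq_lintegral_ofReal hmInt (Eventually.of_forall h.nonneg),
      ← integral_Icc_eq_integral_Ioc]
    exact ENNReal.ofReal_le_ofReal (h.dist_le s hs t (hs.trans hst) hst)
  rw [ENNReal.ofReal_pow dist_nonneg]
  exact (pow_le_pow_left' h1 2).trans
    (sq_lintegral_le hmInt.aemeasurable hg.aemeasurable h.nonneg hg0)

lemma IsMetricDerivOn.ofReal_dist_sq_le' (h : IsMetricDerivOn u m (Ici 0)) {s t : ℝ}
    (hs : 0 ≤ s) (hst : s ≤ t) :
    ENNReal.ofReal (dist (u s) (u t) ^ 2) ≤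
      ENNReal.ofReal (t - s) * ∫⁻ r in Ioc s t, ENNReal.ofReal (m r ^ 2) := by
  have := h.ofReal_dist_sq_le hs hst (g := fun _ => 1) measurable_const (by simp)
  simpa [mul_comm] using this

/-- The bound feeding the weighted Hardy inequality. -/
lemma IsMetricDerivOn.ofReal_dist_sq_le_exp (h : IsMetricDerivOn u m (Ici 0)) {a t : ℝ}
    (ha : 0 < a) (ht : 0 < t) :
    ENNReal.ofReal (dist (u t) (u 0) ^ 2) ≤ ENNReal.ofReal (Real.exp (a * t) / a) *
      ∫⁻ r in Ioc 0 t, ENNReal.ofReal (m r ^ 2) * ENNReal.ofReal (Real.exp (-a * r)) := by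
  have h1 := h.ofReal_dist_sq_le le_rfl ht.le (g := fun r => Real.exp (-a * r)) (by fun_prop)
    (fun r => Real.exp_pos _)
  rw [dist_comm, mul_comm (ENNReal.ofReal _)]
  refine h1.trans ?_
  gcongr
  have e : ∀ r : ℝ, (Real.exp (-a * r))⁻¹ = Real.exp (a * r) := fun r => by
    rw [← Real.exp_neg]; ring_nf
  simp_rw [e]
  calc _ ≤ ∫⁻ r in Iic t, ENNReal.ofReal (Real.exp (a * r)) :=
        lintegral_mono_set Ioc_subset_Iic_self
    _ = _ := by
        rw [← ofReal_integral_eq_lintegral_ofReal (integrableOn_exp_mul_Iic ha t)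
          (by filter_upwards with t; positivity), integral_exp_mul_Iic ha]

lemma IsMetricDerivOn.hardy (h : IsMetricDerivOn u m (Ici 0)) {ε lam a : ℝ} (hε : 0 < ε)
    (ha : a = 1 / (2 * ε)) (hlam : lam < a) {θ : ℝ → ℝ≥0∞} (hθm : Measurable θ)
    (hθ : ∀ s t, 0 < s → s ≤ t → θ t ≤ θ s * ENNReal.ofReal (Real.exp (lam * (t - s)))) :
    ∫⁻ t, ENNReal.ofReal (dist (u t) (u 0) ^ 2) * θ t ∂expMeasure ε ≤
      ENNReal.ofReal (1 / (a * (a - lam))) *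
        ∫⁻ t, ENNReal.ofReal (m t ^ 2) * θ t ∂expMeasure ε := by
  refine WED.hardy hε ha hlam hθm hθ (h.aemeasurable.pow_const 2).ennreal_ofReal fun t ht => ?_
  exact h.ofReal_dist_sq_le_exp (by rw [ha]; positivity) ht

/-- The `L²` norm, with a decreasing weight, of the backward difference quotients of a curve is
at most that of its metric derivative. -/
lemma IsMetricDerivOn.lintegral_quotient_le (h : IsMetricDerivOn u m (Ici 0)) {k : ℝ} (hk : 0 < k)
    {W : ℝ → ℝ≥0∞} (hWm : Measurable W) (hW : ∀ s t, 0 < s → s ≤ t → W t ≤ W s) :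
    ∫⁻ t in Ioi k, ENNReal.ofReal ((dist (u (t - k)) (u t) / k) ^ 2) * W t ≤
      ∫⁻ t in Ioi 0, ENNReal.ofReal (m t ^ 2) * W t := by
  have hρ : AEMeasurable (fun r => ENNReal.ofReal (m r ^ 2)) (volume.restrict (Ioi 0)) :=
    (h.aemeasurable.pow_const 2).ennreal_ofReal
  set ρ := hρ.mk _ with hρd
  have hρm : Measurable ρ := hρ.measurable_mk
  have hρae : (fun r => ENNReal.ofReal (m r ^ 2)) =ᵐ[volume.restrict (Ioi 0)] ρ := hρ.ae_eq_mk
  let K : ℝ → ℝ → ℝ≥0∞ := fun t r => (Ico r (r + k)).indicator (fun _ =>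
    ρ r * W r * ENNReal.ofReal (1 / k)) t
  have hK : Measurable (Function.uncurry K) := by
    have : Function.uncurry K = {p : ℝ × ℝ | p.2 ≤ p.1 ∧ p.1 < p.2 + k}.indicator (fun p =>
      ρ p.2 * W p.2 * ENNReal.ofReal (1 / k)) := by
      ext p
      simp [K, Function.uncurry, indicator]
    rw [this]
    have hS : MeasurableSet {p : ℝ × ℝ | p.2 ≤ p.1 ∧ p.1 < p.2 + k} :=
      (measurableSet_le measurable_snd measurable_fst).inter
        (measurableSet_lt measurable_fst (measurable_snd.add_const k))
    exact Measurable.indicator (by fun_prop) hS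
  calc _ ≤ ∫⁻ t in Ioi k, ∫⁻ r in Ioi 0, K t r := by
        refine setLIntegral_mono' measurableSet_Ioi fun t ht => ?_
        have ht' : k < t := ht
        have h1 := h.ofReal_dist_sq_le' (s := t - k) (t := t) (by linarith) (by linarith)
        rw [_root_.sub_sub_cancel] at h1
        calc _ ≤ (ENNReal.ofReal (1 / k) * ∫⁻ r in Ioc (t - k) t, ENNReal.ofReal (m r ^ 2)) * W t := by
              gcongr
              rw [div_pow, div_eq_mul_inv, ENNReal.ofReal_mul (by positivity)]
              calc _ ≤ (ENNReal.ofReal k * ∫⁻ r in Ioc (t - k) t, ENNReal.ofReal (m r ^ 2)) *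
                    ENNReal.ofReal (k ^ 2)⁻¹ := by gcongr
                _ = (ENNReal.ofReal k * ENNReal.ofReal (k ^ 2)⁻¹) *
                    ∫⁻ r in Ioc (t - k) t, ENNReal.ofReal (m r ^ 2) := by ring
                _ = _ := by
                  rw [← ENNReal.ofReal_mul hk.le]
                  congr 2; field_simp
          _ = (∫⁻ r in Ioc (t - k) t, ρ r) * (ENNReal.ofReal (1 / k) * W t) := by
              have : ∫⁻ r in Ioc (t - k) t, ENNReal.ofReal (m r ^ 2) =
                  ∫⁻ r in Ioc (t - k) t, ρ r :=
                lintegral_congr_ae (ae_mono (Measure.restrict_mono_set volume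
                  (fun x (hx : x ∈ Ioc (t - k) t) => by
                    have := hx.1; rw [mem_Ioi]; linarith)) hρae)
              rw [this]; ring
          _ = ∫⁻ r in Ioc (t - k) t, ρ r * (ENNReal.ofReal (1 / k) * W t) := by
              rw [lintegral_mul_const _ hρm]
          _ ≤ ∫⁻ r in Ioc (t - k) t, K t r := by
              refine setLIntegral_mono' measurableSet_Ioc fun r hr => ?_
              have hmem : t ∈ Ico r (r + k) := ⟨hr.2, by linarith [hr.1]⟩
              simp only [K, indicator_of_mem hmem]
              rw [mul_assoc, mul_comm (W r)]
              gcongr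
              exact hW r t (by linarith [hr.1]) hr.2
          _ ≤ _ := lintegral_mono_set (fun r hr => by rw [mem_Ioi]; linarith [hr.1])
    _ = ∫⁻ r in Ioi 0, ∫⁻ t in Ioi k, K t r := lintegral_lintegral_swap hK.aemeasurable
    _ ≤ ∫⁻ r in Ioi 0, ρ r * W r := by
        refine setLIntegral_mono' measurableSet_Ioi fun r hr => ?_
        calc _ ≤ ∫⁻ t, K t r := setLIntegral_le_lintegral _ _
          _ = _ := by
              rw [lintegral_indicator measurableSet_Ico, setLIntegral_const, Real.volume_Ico,
                add_sub_cancel_left, mul_assoc, ← ENNReal.ofReal_mul (by positivity),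
                one_div_mul_cancel hk.ne', ENNReal.ofReal_one, mul_one]
    _ = _ := by
        refine lintegral_congr_ae ?_
        filter_upwards [hρae] with r hr
        rw [← hr]

end Curve

end WED

namespace WED

/-! ### Existence of the metric derivative -/

lemma ae_Ioi_of_forall_nat {P : ℝ → Prop} (h : ∀ n : ℕ, ∀ᵐ t : ℝ, t ∈ Icc 0 (n:ℝ) → P t) :
    ∀ᵐ t : ℝ, 0 < t → P t := by
  filter_upwards [ae_all_iff.2 h] with t ht h0
  obtain ⟨n, hn⟩ := exists_nat_ge t
  exact ht n ⟨h0.le, hn⟩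

/-- A curve which is absolutely continuous on bounded intervals, and whose backward difference
quotients are bounded in `L²_loc`, belongs to `AC²_loc`. The metric derivative is the supremum of
the absolute values of the derivatives of the distances to a countable dense subset of the
trajectory. -/
lemma exists_metricDeriv {X : Type*} [MetricSpace X] {u : ℝ → X}
    (hcont : Continuous u)
    (hAC : ∀ T : ℝ, 0 ≤ T → AbsolutelyContinuousOnInterval u 0 T)
    (hQ : ∀ T : ℝ, ∃ C : ℝ≥0∞, C ≠ ⊤ ∧ ∀ k : ℝ, 0 < k →
      ∫⁻ t in Ioc k T, ENNReal.ofReal ((dist (u (t - k)) (u t) / k) ^ 2) ≤ C) :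
    ∃ m : ℝ → ℝ, AC2LocOn u m (Ici 0) := by
  let r : ℕ → ℝ := fun i => |TopologicalSpace.denseSeq ℝ i|
  have hr : ∀ s : ℝ, 0 ≤ s → ∀ η > 0, ∃ i, dist (u (r i)) (u s) < η := by
    intro s hs η hη
    have h1 : Continuous fun x : ℝ => dist (u |x|) (u s) := by fun_prop
    have h2 : IsOpen {x : ℝ | dist (u |x|) (u s) < η} := isOpen_lt h1 continuous_const
    obtain ⟨i, hi⟩ := (TopologicalSpace.denseRange_denseSeq ℝ).exists_mem_open h2
      ⟨s, by simp [abs_of_nonneg hs, hη]⟩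
    exact ⟨i, hi⟩
  let f : ℕ → ℝ → ℝ := fun i t => dist (u t) (u (r i))
  have hfd : ∀ i s t, |f i s - f i t| ≤ dist (u s) (u t) := fun i s t => abs_dist_sub_le _ _ _
  have hfAC : ∀ i T, 0 ≤ T → AbsolutelyContinuousOnInterval (f i) 0 T := by
    intro i T hT
    refine squeeze_zero (fun E => Finset.sum_nonneg fun _ _ => dist_nonneg) (fun E => ?_) (hAC T hT)
    exact Finset.sum_le_sum fun j _ => hfd i _ _
  have hdiff : ∀ᵐ t : ℝ, 0 < t → ∀ i, DifferentiableAt ℝ (f i) t := by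
    refine ae_Ioi_of_forall_nat fun n => ?_
    have : ∀ i, ∀ᵐ t : ℝ, t ∈ Icc 0 (n:ℝ) → DifferentiableAt ℝ (f i) t := fun i => by
      have := (hfAC i n n.cast_nonneg).ae_differentiableAt
      rwa [uIcc_of_le n.cast_nonneg] at this
    filter_upwards [ae_all_iff.2 this] with t ht h0 i using ht i h0
  let M : ℝ → ℝ≥0∞ := fun t => ⨆ i, ENNReal.ofReal (deriv (f i) t ^ 2)
  have hMm : Measurable M := by
    refine Measurable.iSup fun i => ?_
    exact ((measurable_deriv (f i)).pow_const 2).ennreal_ofReal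
  let κ : ℕ → ℝ := fun k => 1 / ((k:ℝ) + 1)
  have hκ0 : ∀ k, 0 < κ k := fun k => by positivity
  have hκ : Tendsto κ atTop (𝓝 0) := tendsto_one_div_add_atTop_nhds_zero_nat
  let D : ℕ → ℝ → ℝ≥0∞ := fun k => (Ioi (κ k)).indicator fun t =>
    ENNReal.ofReal ((dist (u (t - κ k)) (u t) / κ k) ^ 2)
  have hDm : ∀ k, Measurable (D k) := fun k => by
    refine Measurable.indicator (ENNReal.measurable_ofReal.comp (Continuous.measurable ?_))
      measurableSet_Ioi
    fun_prop
  have hMD : ∀ t, 0 < t → (∀ i, DifferentiableAt ℝ (f i) t) →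
      M t ≤ liminf (fun k => D k t) atTop := by
    intro t ht hd
    refine iSup_le fun i => ?_
    have hl : Tendsto (fun k => t - κ k) atTop (𝓝[≠] t) := by
      refine tendsto_nhdsWithin_iff.2 ⟨by simpa using hκ.const_sub t, Eventually.of_forall fun k => ?_⟩
      have := hκ0 k
      simp only [mem_compl_iff, mem_singleton_iff]
      linarith
    have h1 := (hd i).hasDerivAt.tendsto_slope.comp hl
    have h2 := (ENNReal.continuous_ofReal.tendsto _).comp (h1.pow 2)
    rw [← h2.liminf_eq]
    refine liminf_le_liminf ?_
    filter_upwards [hκ.eventually_lt_const ht] with k hk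
    have : t ∈ Ioi (κ k) := hk
    simp only [D, indicator_of_mem this, Function.comp]
    refine ENNReal.ofReal_le_ofReal (sq_le_sq' ?_ ?_)
    all_goals
      have h3 := abs_le.1 (hfd i (t - κ k) t)
      have h4 := hκ0 k
      rw [slope_def_field, sub_sub_cancel_left, div_neg]
    · rw [neg_le_neg_iff]; gcongr; exact h3.2
    · rw [← neg_div]; gcongr; linarith [h3.1]
  have hMT : ∀ T : ℝ, ∫⁻ t in Ioc 0 T, M t < ⊤ := by
    intro T
    obtain ⟨C, hC, hCk⟩ := hQ T
    calc ∫⁻ t in Ioc 0 T, M t ≤ ∫⁻ t in Ioc 0 T, liminf (fun k => D k t) atTop := by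
          refine setLIntegral_mono_ae' measurableSet_Ioc ?_
          filter_upwards [hdiff] with t ht h0
          exact hMD t h0.1 (ht h0.1)
      _ ≤ liminf (fun k => ∫⁻ t in Ioc 0 T, D k t) atTop := lintegral_liminf_le hDm
      _ ≤ liminf (fun k : ℕ => C) atTop := by
          refine liminf_le_liminf (Eventually.of_forall fun k => ?_)
          refine le_trans ?_ (hCk _ (hκ0 k))
          simp only [D]
          rw [lintegral_indicator measurableSet_Ioi, Measure.restrict_restrict measurableSet_Ioi]
          exact lintegral_mono_set fun t ht => ⟨ht.1, ht.2.2⟩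
      _ < ⊤ := by simpa using hC.lt_top
  have hMfin : ∀ᵐ t : ℝ, 0 < t → M t < ⊤ := by
    refine ae_Ioi_of_forall_nat fun n => ?_
    have h1 := ae_lt_top hMm (hMT n).ne
    rw [restrict_Ioc_eq_restrict_Icc] at h1
    exact (ae_restrict_iff' measurableSet_Icc).1 h1
  let m : ℝ → ℝ := fun t => √(M t).toReal
  have hmm : Measurable m := hMm.ennreal_toReal.sqrt
  have hm0 : ∀ t, 0 ≤ m t := fun t => Real.sqrt_nonneg _
  have hm2 : ∀ t, m t ^ 2 = (M t).toReal := fun t => Real.sq_sqrt ENNReal.toReal_nonneg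
  have hm2i : ∀ s ∈ Ici (0:ℝ), ∀ t ∈ Ici (0:ℝ), IntegrableOn (fun r => m r ^ 2) (Icc s t) := by
    intro s hs t _
    have h1 : IntegrableOn (fun r => m r ^ 2) (Icc 0 t) := by
      rw [integrableOn_Icc_iff_integrableOn_Ioc]
      simp_rw [hm2]
      exact integrable_toReal_of_lintegral_ne_top hMm.aemeasurable (hMT t).ne
    exact h1.mono_set (Icc_subset_Icc_left hs)
  have hmi : ∀ s ∈ Ici (0:ℝ), ∀ t ∈ Ici (0:ℝ), IntegrableOn m (Icc s t) := by
    intro s hs t ht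
    refine Integrable.mono' ((hm2i s hs t ht).add (integrable_const (1:ℝ)))
      hmm.aestronglyMeasurable (Eventually.of_forall fun x => ?_)
    rw [Real.norm_of_nonneg (hm0 x)]
    simp only [Pi.add_apply]
    nlinarith [sq_nonneg (m x - 1), hm0 x]
  have hmd : ∀ᵐ t : ℝ, 0 < t → ∀ i, |deriv (f i) t| ≤ m t := by
    filter_upwards [hMfin] with t ht h0 i
    refine abs_le_of_sq_le_sq ?_ (hm0 t)
    rw [hm2]
    exact (ENNReal.ofReal_le_iff_le_toReal (ht h0).ne).1
      (le_iSup (fun i => ENNReal.ofReal (deriv (f i) t ^ 2)) i)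
  have hmint : ∀ s ∈ Ici (0:ℝ), ∀ t ∈ Ici (0:ℝ), IntervalIntegrable m volume s t := by
    intro s hs t ht
    refine ⟨(hmi s hs t ht).mono_set Ioc_subset_Icc_self,
      (hmi t ht s hs).mono_set Ioc_subset_Icc_self⟩
  have hdist : ∀ s ∈ Ici (0:ℝ), ∀ t ∈ Ici (0:ℝ), s ≤ t → dist (u s) (u t) ≤ ∫ x in s..t, m x := by
    intro s hs t ht hst
    have hs0 : 0 ≤ s := hs
    refine le_of_forall_pos_le_add fun η hη => ?_
    obtain ⟨i, hi⟩ := hr s hs (η / 2) (by positivity)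
    have h1 := ((hfAC i t ht).mono (c := s) (d := t) (by
      rw [uIcc_of_le hst, uIcc_of_le (hs0.trans hst)]
      exact Icc_subset_Icc_left hs0)).integral_deriv_eq_sub
    have h2 : ‖∫ x in s..t, deriv (f i) x‖ ≤ ∫ x in s..t, m x := by
      refine intervalIntegral.norm_integral_le_of_norm_le hst ?_ (hmint s hs t ht)
      filter_upwards [hmd] with x hx hxs
      exact hx (hs0.trans_lt hxs.1) i
    rw [h1, Real.norm_eq_abs] at h2
    have h3 := (abs_le.1 h2).2
    have h4 : dist (u s) (u t) ≤ f i s + f i t := dist_triangle_right _ _ _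
    have h5 : f i s < η / 2 := by simpa [f, dist_comm] using hi
    linarith
  refine ⟨m, ⟨hm0, hmi, ?_, ?_⟩, hm2i⟩
  · intro s hs t ht hst
    rw [integral_Icc_eq_integral_Ioc, ← intervalIntegral.integral_of_le hst]
    exact hdist s hs t ht hst
  · have hH : ∀ᵐ t : ℝ, 0 < t → HasDerivAt (fun x => ∫ y in (0:ℝ)..x, m y) (m t) t := by
      refine ae_Ioi_of_forall_nat fun n => ?_
      have := (hmint 0 self_mem_Ici n (mem_Ici.2 n.cast_nonneg)).ae_hasDerivAt_integral
      rw [uIcc_of_le n.cast_nonneg] at this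
      filter_upwards [this] with t ht h0
      exact ht h0 0 ⟨le_rfl, n.cast_nonneg⟩
    rw [← restrict_Ioi_eq_restrict_Ici, ae_restrict_iff' measurableSet_Ioi]
    filter_upwards [hH, hdiff, hMfin] with t hHt hdt hMt h0
    have h0' : 0 < t := h0
    refine Tendsto.mono_left ?_ (nhdsWithin_mono t fun x hx => hx.2 : _ ≤ 𝓝[≠] t)
    refine tendsto_order.2 ⟨fun b hb => ?_, fun b hb => ?_⟩
    -- Lower bound: some `f i` has `|deriv (f i) t| > b`, and its quotients bound those of `u` below.
    · rcases lt_or_ge b 0 with hb0 | hb0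
      · exact Eventually.of_forall fun s => hb0.trans_le (by positivity)
      have h1 : ENNReal.ofReal (b ^ 2) < M t := by
        rw [ENNReal.ofReal_lt_iff_lt_toReal (by positivity) (hMt h0).ne, ← hm2]
        exact pow_lt_pow_left₀ hb hb0 two_ne_zero
      obtain ⟨i, hi⟩ := lt_iSup_iff.1 h1
      have hi' : b < |deriv (f i) t| := by
        have h2 := (ENNReal.ofReal_lt_ofReal_iff_of_nonneg (by positivity)).1 hi
        rw [← abs_of_nonneg hb0]
        exact sq_lt_sq.1 h2
      filter_upwards [((hdt h0 i).hasDerivAt.tendsto_slope.abs).eventually_const_lt hi'] with s hs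
      refine hs.trans_le ?_
      rw [slope_def_field, abs_div]
      gcongr
      exact hfd i s t
    -- Upper bound: the quotients of `u` are at most those of `∫ m`, which tend to `m t`.
    · have h1 := (hHt h0).tendsto_slope.abs
      rw [abs_of_nonneg (hm0 t)] at h1
      filter_upwards [h1.eventually_lt_const hb, mem_nhdsWithin_of_mem_nhds (Ioi_mem_nhds h0')]
        with s hs hs0
      have hs0' : s ∈ Ici (0:ℝ) := mem_Ici.2 (le_of_lt (mem_Ioi.1 hs0))
      have ht0' : t ∈ Ici (0:ℝ) := h0'.le
      refine lt_of_le_of_lt ?_ hs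
      rw [slope_def_field, abs_div]
      gcongr
      rw [intervalIntegral.integral_interval_sub_left (hmint 0 self_mem_Ici s hs0')
        (hmint 0 self_mem_Ici t ht0')]
      rcases le_total s t with hst | hst
      · rw [intervalIntegral.integral_symm, abs_neg]
        exact (hdist s hs0' t ht0' hst).trans (le_abs_self _)
      · rw [dist_comm]
        exact (hdist t ht0' s hs0' hst).trans (le_abs_self _)

end WED

namespace WED

/-! ### The energy of a single curve -/

lemma epos_eq : epos = EReal.toENNReal := rfl

lemma measurable_epos : Measurable epos := by
  rw [epos_eq]; exact measurable_ereal_toENNReal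

lemma epos_coe (r : ℝ) : epos (r : EReal) = ENNReal.ofReal r := by
  simp [epos]

/-- `F⁺ + r = F⁻ + (F + r)⁺` whenever `F ≥ -r`. -/
lemma epos_add_ofReal {F : EReal} {r : ℝ} (hr : 0 ≤ r) (h : ((-r : ℝ) : EReal) ≤ F) :
    epos F + ENNReal.ofReal r = epos (-F) + epos (F + r) := by
  induction F with
  | bot => simp at h
  | top => simp [epos]
  | coe f =>
    have h' : -r ≤ f := by exact_mod_cast h
    rw [← EReal.coe_neg, ← EReal.coe_add, epos_coe, epos_coe, epos_coe]
    rcases le_total 0 f with hf | hf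
    · rw [ENNReal.ofReal_of_nonpos (by linarith : -f ≤ 0), ENNReal.ofReal_add hf hr, zero_add]
    · rw [ENNReal.ofReal_of_nonpos hf, zero_add,
        ← ENNReal.ofReal_add (by linarith) (by linarith)]
      congr 1; ring

lemma epos_add_of_nonneg {a : ℝ} {F : EReal} {r : ℝ} (ha : 0 ≤ a)
    (h : ((-r : ℝ) : EReal) ≤ F) :
    epos ((a : EReal) + F + r) = ENNReal.ofReal a + epos (F + r) := by
  induction F with
  | bot => simp at h
  | top => simp [epos]
  | coe f =>
    have h' : -r ≤ f := by exact_mod_cast h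
    rw [← EReal.coe_add, ← EReal.coe_add, ← EReal.coe_add, epos_coe, epos_coe, add_assoc,
      ENNReal.ofReal_add ha (by linarith)]

/-- The weight `min(1, e^{(t-R)/(4ε)})`, which selects the tail `t > R` but grows slowly enough for
the weighted Hardy inequality to hold. -/
def tailWeight (ε R t : ℝ) : ℝ≥0∞ := ENNReal.ofReal (min 1 (Real.exp ((t - R) / (4 * ε))))

lemma measurable_tailWeight (ε R : ℝ) : Measurable (tailWeight ε R) := by
  unfold tailWeight; fun_prop

lemma tailWeight_le_one (ε R t : ℝ) : tailWeight ε R t ≤ 1 := by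
  unfold tailWeight
  rw [ENNReal.ofReal_le_one]; exact min_le_left _ _

lemma tailWeight_mono {ε R s t : ℝ} (hε : 0 < ε) (h : s ≤ t) :
    tailWeight ε R s ≤ tailWeight ε R t := by
  unfold tailWeight
  gcongr

lemma tailWeight_of_le {ε R t : ℝ} (hε : 0 < ε) (h : R ≤ t) : tailWeight ε R t = 1 := by
  unfold tailWeight
  rw [min_eq_left, ENNReal.ofReal_one]
  exact Real.one_le_exp (div_nonneg (by linarith) (by linarith))

lemma tailWeight_growth {ε R s t : ℝ} (hε : 0 < ε) (h : s ≤ t) :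
    tailWeight ε R t ≤ tailWeight ε R s * ENNReal.ofReal (Real.exp (1 / (4 * ε) * (t - s))) := by
  unfold tailWeight
  rw [← ENNReal.ofReal_mul (le_min zero_le_one (Real.exp_pos _).le)]
  refine ENNReal.ofReal_le_ofReal ?_
  rw [min_mul_of_nonneg _ _ (Real.exp_pos _).le, one_mul, ← Real.exp_add]
  refine min_le_min (Real.one_le_exp (mul_nonneg (by positivity) (by linarith))) (le_of_eq ?_)
  congr 1; ring

lemma tendsto_tailWeight {ε : ℝ} (hε : 0 < ε) (t : ℝ) :
    Tendsto (fun n : ℕ => tailWeight ε n t) atTop (𝓝 0) := by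
  have h1 : Tendsto (fun n : ℕ => (t - (n:ℝ)) / (4 * ε)) atTop atBot := by
    refine Tendsto.atBot_div_const (by positivity) ?_
    exact tendsto_atBot_add_const_left _ t (tendsto_neg_atTop_atBot.comp tendsto_natCast_atTop_atTop)
  have h2 := (tendsto_const_nhds (x := (1:ℝ))).min (Real.tendsto_exp_atBot.comp h1)
  have h3 := (ENNReal.continuous_ofReal.tendsto _).comp h2
  simpa [tailWeight, Function.comp_def] using h3

lemma tendsto_lintegral_tailWeight {ε : ℝ} (hε : 0 < ε) :
    Tendsto (fun n : ℕ => (∫⁻ t, tailWeight ε n t ∂expMeasure ε).toReal) atTop (𝓝 0) := by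
  have := isProbabilityMeasure_expMeasure hε
  have h := tendsto_lintegral_of_dominated_convergence (μ := expMeasure ε) (fun _ => 1)
    (F := fun n : ℕ => tailWeight ε n) (f := fun _ => 0)
    (fun n => measurable_tailWeight ε n)
    (fun n => Eventually.of_forall (tailWeight_le_one ε n)) (by simp)
    (Eventually.of_forall fun t => tendsto_tailWeight hε t)
  have h2 := (ENNReal.tendsto_toReal (by simp)).comp h
  simpa [Function.comp_def] using h2

/-- The complementary weight `1 - tailWeight`, a decreasing function supported in `t < R`. -/
def headWeight (ε R t : ℝ) : ℝ≥0∞ := 1 - tailWeight ε R t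

lemma measurable_headWeight (ε R : ℝ) : Measurable (headWeight ε R) := by
  unfold headWeight
  exact measurable_const.sub (measurable_tailWeight ε R)

lemma headWeight_add (ε R t : ℝ) : headWeight ε R t + tailWeight ε R t = 1 :=
  tsub_add_cancel_of_le (tailWeight_le_one ε R t)

lemma headWeight_le_one (ε R t : ℝ) : headWeight ε R t ≤ 1 := tsub_le_self

lemma lintegral_split {ε : ℝ} (R : ℝ) {f : ℝ → ℝ≥0∞} (hf : AEMeasurable f (expMeasure ε)) :
    ∫⁻ t, f t ∂expMeasure ε =
      ∫⁻ t, headWeight ε R t * f t ∂expMeasure ε + ∫⁻ t, tailWeight ε R t * f t ∂expMeasure ε := by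
  have h1 : AEMeasurable (fun t => headWeight ε R t * f t) (expMeasure ε) :=
    (measurable_headWeight ε R).aemeasurable.mul hf
  rw [← lintegral_add_left' h1]
  simp_rw [← add_mul, headWeight_add, one_mul]

/-- Integrated form of `epos_add_ofReal`; it avoids subtraction in `ℝ≥0∞`. -/
lemma lintegral_epos_weighted {μ : Measure ℝ} {w : ℝ → ℝ≥0∞} {F : ℝ → EReal} {r : ℝ → ℝ}
    (hw : AEMeasurable w μ) (hF : AEMeasurable F μ) (hr0 : ∀ t, 0 ≤ r t)
    (h : ∀ᵐ t ∂μ, w t ≠ 0 → ((-r t : ℝ) : EReal) ≤ F t) :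
    ∫⁻ t, w t * epos (F t) ∂μ + ∫⁻ t, w t * ENNReal.ofReal (r t) ∂μ =
      ∫⁻ t, w t * epos (-F t) ∂μ + ∫⁻ t, w t * epos (F t + r t) ∂μ := by
  have h1 : AEMeasurable (fun t => w t * epos (F t)) μ :=
    hw.mul (measurable_epos.comp_aemeasurable hF)
  have h2 : AEMeasurable (fun t => w t * epos (-F t)) μ :=
    hw.mul (measurable_epos.comp_aemeasurable hF.neg)
  rw [← lintegral_add_left' h1, ← lintegral_add_left' h2]
  refine lintegral_congr_ae ?_
  filter_upwards [h] with t ht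
  by_cases h0 : w t = 0
  · simp [h0]
  · rw [← mul_add, ← mul_add, epos_add_ofReal (hr0 t) (ht h0)]

variable {X : Type*} [MetricSpace X]

lemma IsMetricDerivOn.continuousOn {u : ℝ → X} {m : ℝ → ℝ} (h : IsMetricDerivOn u m (Ici 0)) :
    ContinuousOn u (Ici 0) := by
  intro t ht
  have ht0 : (0:ℝ) ≤ t := ht
  have ht1 : (0:ℝ) ≤ t + 1 := by positivity
  have hmInt : ∀ s, 0 ≤ s → IntervalIntegrable m volume 0 s := fun s hs =>
    (intervalIntegrable_iff_integrableOn_Icc_of_le hs).2 (h.locInt 0 self_mem_Ici s hs)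
  have h1 : ContinuousOn (fun x => ∫ y in (0:ℝ)..x, m y) (Icc 0 (t + 1)) := by
    have := intervalIntegral.continuousOn_primitive_interval (μ := volume) (f := m) (a := 0)
      (b := t + 1) (by rw [uIcc_of_le ht1]; exact h.locInt 0 self_mem_Ici (t + 1) ht1)
    rwa [uIcc_of_le ht1] at this
  have h2 := h1 t ⟨ht0, by linarith⟩
  have h3 : ContinuousWithinAt (fun x => ∫ y in (0:ℝ)..x, m y) (Ici 0) t := by
    refine h2.mono_of_mem_nhdsWithin ?_
    filter_upwards [self_mem_nhdsWithin, mem_nhdsWithin_of_mem_nhds (Iio_mem_nhds (lt_add_one t))]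
      with s hs hs'
    exact ⟨hs, le_of_lt hs'⟩
  rw [ContinuousWithinAt, tendsto_iff_dist_tendsto_zero] at h3 ⊢
  refine squeeze_zero' (Eventually.of_forall fun _ => dist_nonneg) ?_ h3
  filter_upwards [self_mem_nhdsWithin] with s hs
  have hs0 : (0:ℝ) ≤ s := hs
  rw [Real.dist_eq, intervalIntegral.integral_interval_sub_left (hmInt s hs0) (hmInt t ht0)]
  rcases le_total s t with hst | hst
  · rw [intervalIntegral.integral_symm, abs_neg, intervalIntegral.integral_of_le hst,
      ← integral_Icc_eq_integral_Ioc]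
    exact (h.dist_le s hs t ht hst).trans (le_abs_self _)
  · rw [dist_comm, intervalIntegral.integral_of_le hst, ← integral_Icc_eq_integral_Ioc]
    exact (h.dist_le t ht s hs hst).trans (le_abs_self _)

/-- The properties of an admissible curve that are used in energy estimates. The constant `q`
stands for an upper bound of `Q(u 0)`. -/
structure GoodCurve (φ : X → EReal) (ε B q : ℝ) (u : ℝ → X) (m : ℝ → ℝ) : Prop where
  hε : 0 < ε
  hB : 0 ≤ B
  hεB : B ≤ 1 / (16 * ε)
  hq : 0 ≤ q
  deriv : IsMetricDerivOn u m (Ici 0)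
  fin : (∫⁻ t, ENNReal.ofReal (m t ^ 2) ∂expMeasure ε) < ⊤
  meas : AEMeasurable (fun t => φ (u t)) (expMeasure ε)
  low : ∀ y, ((-(B * dist y (u 0) ^ 2 + q) : ℝ) : EReal) ≤ φ y

namespace GoodCurve

variable {φ : X → EReal} {ε B q : ℝ} {u : ℝ → X} {m : ℝ → ℝ}

lemma aemeasurable_m (h : GoodCurve φ ε B q u m) : AEMeasurable m (expMeasure ε) :=
  h.deriv.aemeasurable.mono_ac (expMeasure_absolutelyContinuous ε)

lemma aemeasurable_dist (h : GoodCurve φ ε B q u m) :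
    AEMeasurable (fun t => dist (u t) (u 0)) (expMeasure ε) := by
  have h1 : ContinuousOn (fun t => dist (u t) (u 0)) (Ioi 0) :=
    (continuous_id.dist continuous_const).comp_continuousOn
      (h.deriv.continuousOn.mono Ioi_subset_Ici_self)
  exact (h1.aemeasurable measurableSet_Ioi).mono_ac (expMeasure_absolutelyContinuous ε)

lemma aemeasurable_integrand (h : GoodCurve φ ε B q u m) :
    AEMeasurable (wedIntegrand φ ε u m) (expMeasure ε) := by
  have h1 : AEMeasurable (fun t => ((ε / 2 * m t ^ 2 : ℝ) : EReal)) (expMeasure ε) :=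
    measurable_coe_real_ereal.comp_aemeasurable ((h.aemeasurable_m.pow_const 2).const_mul _)
  exact h1.add h.meas

lemma low_integrand (h : GoodCurve φ ε B q u m) {K : ℝ} {t : ℝ}
    (hK : ((-K : ℝ) : EReal) ≤ φ (u t)) : ((-K : ℝ) : EReal) ≤ wedIntegrand φ ε u m t := by
  have hε := h.hε
  unfold wedIntegrand
  refine hK.trans ?_
  have : (0:EReal) ≤ ((ε / 2 * m t ^ 2 : ℝ) : EReal) := by
    exact_mod_cast (by positivity : (0:ℝ) ≤ ε / 2 * m t ^ 2)
  simpa using add_le_add_left this (φ (u t))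

/-- Half of the kinetic energy compensates the quadratic lower bound of the potential energy. -/
lemma lintegral_dist_le (h : GoodCurve φ ε B q u m) :
    ∫⁻ t, ENNReal.ofReal (B * dist (u t) (u 0) ^ 2) ∂expMeasure ε ≤
      ENNReal.ofReal (ε / 4) * ∫⁻ t, ENNReal.ofReal (m t ^ 2) ∂expMeasure ε := by
  have hε := h.hε
  have h1 := h.deriv.hardy hε rfl (lam := 0) (by positivity) (θ := fun _ => 1) measurable_const
    (by simp)
  simp only [mul_one] at h1
  simp_rw [ENNReal.ofReal_mul h.hB]
  rw [lintegral_const_mul' _ _ ENNReal.ofReal_ne_top]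
  refine (mul_le_mul_right h1 _).trans ?_
  rw [← mul_assoc, ← ENNReal.ofReal_mul h.hB]
  gcongr
  have h2 := h.hεB
  rw [le_div_iff₀ (by positivity)] at h2
  have e : 1 / (1 / (2 * ε) * (1 / (2 * ε) - 0)) = 4 * ε ^ 2 := by field_simp; norm_num
  rw [e]
  nlinarith

/-- On the tail, the whole kinetic energy compensates the quadratic lower bound of the potential
energy. -/
lemma lintegral_tail_dist_le (h : GoodCurve φ ε B q u m) (R : ℝ) :
    ∫⁻ t, tailWeight ε R t * ENNReal.ofReal (B * dist (u t) (u 0) ^ 2) ∂expMeasure ε ≤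
      ∫⁻ t, tailWeight ε R t * ENNReal.ofReal (ε / 2 * m t ^ 2) ∂expMeasure ε := by
  have hε := h.hε
  have h1 := h.deriv.hardy hε rfl (lam := 1 / (4 * ε)) (by gcongr; norm_num)
    (measurable_tailWeight ε R) (fun s t _ hst => tailWeight_growth hε hst)
  simp_rw [ENNReal.ofReal_mul h.hB, ENNReal.ofReal_mul (by positivity : 0 ≤ ε / 2),
    mul_left_comm (tailWeight _ _ _), mul_comm (tailWeight _ _ _)]
  rw [lintegral_const_mul' _ _ ENNReal.ofReal_ne_top, lintegral_const_mul' _ _ ENNReal.ofReal_ne_top]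
  refine (mul_le_mul_right h1 _).trans ?_
  rw [← mul_assoc, ← ENNReal.ofReal_mul h.hB]
  gcongr
  have h2 := h.hεB
  rw [le_div_iff₀ (by positivity)] at h2
  have e : 1 / (1 / (2 * ε) * (1 / (2 * ε) - 1 / (4 * ε))) = 8 * ε ^ 2 := by field_simp; norm_num
  rw [e]
  nlinarith

end GoodCurve

end WED

namespace WED

/-! ### Energy estimates -/

namespace GoodCurve

variable {X : Type*} [MetricSpace X] {φ : X → EReal} {ε B q : ℝ} {u : ℝ → X} {m : ℝ → ℝ}

lemma lintegral_neg_lt_top (h : GoodCurve φ ε B q u m) :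
    ∫⁻ t, ENNReal.ofReal (B * dist (u t) (u 0) ^ 2 + q) ∂expMeasure ε < ⊤ := by
  have := isProbabilityMeasure_expMeasure h.hε
  have hB := h.hB
  simp_rw [fun t => ENNReal.ofReal_add (by positivity : 0 ≤ B * dist (u t) (u 0) ^ 2) h.hq]
  rw [lintegral_add_right _ measurable_const]
  refine ENNReal.add_lt_top.2 ⟨h.lintegral_dist_le.trans_lt
    (ENNReal.mul_lt_top ENNReal.ofReal_lt_top h.fin), by simp⟩

lemma epos_neg_le (h : GoodCurve φ ε B q u m) (t : ℝ) :
    epos (-wedIntegrand φ ε u m t) ≤ ENNReal.ofReal (B * dist (u t) (u 0) ^ 2 + q) := by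
  rw [← epos_coe, epos_eq]
  refine EReal.toENNReal_le_toENNReal ?_
  rw [EReal.neg_le, ← EReal.coe_neg]
  exact h.low_integrand (h.low _)

/-- The negative part of the integrand has finite integral. -/
lemma neg_lt_top (h : GoodCurve φ ε B q u m) :
    ∫⁻ t, epos (-wedIntegrand φ ε u m t) ∂expMeasure ε < ⊤ :=
  (lintegral_mono h.epos_neg_le).trans_lt h.lintegral_neg_lt_top

/-- The energy is bounded above by `c` exactly when its positive part is finite and bounded by `c`
plus the negative part. -/
lemma WEDfun_le_iff (h : GoodCurve φ ε B q u m) (c : ℝ) :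
    WEDfun φ ε u m ≤ c ↔ (∫⁻ t, epos (wedIntegrand φ ε u m t) ∂expMeasure ε) ≠ ⊤ ∧
      (∫⁻ t, epos (wedIntegrand φ ε u m t) ∂expMeasure ε).toReal ≤
        (∫⁻ t, epos (-wedIntegrand φ ε u m t) ∂expMeasure ε).toReal + c := by
  unfold WEDfun eIntegral
  have hN := h.neg_lt_top.ne
  generalize (∫⁻ t, epos (wedIntegrand φ ε u m t) ∂expMeasure ε) = P
  generalize (∫⁻ t, epos (-wedIntegrand φ ε u m t) ∂expMeasure ε) = N at *
  lift N to NNReal using hN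
  induction P with
  | top => simp [show ((N : ℝ≥0∞) : EReal) = ((N : ℝ) : EReal) from rfl]
  | coe p =>
    simp only [show ((N : ℝ≥0∞) : EReal) = ((N : ℝ) : EReal) from rfl,
      show ((p : ℝ≥0∞) : EReal) = ((p : ℝ) : EReal) from rfl, ← EReal.coe_sub, EReal.coe_le_coe_iff]
    simp [add_comm]

lemma epos_integrand_add (h : GoodCurve φ ε B q u m) {K t : ℝ}
    (hK : ((-K : ℝ) : EReal) ≤ φ (u t)) :
    epos (wedIntegrand φ ε u m t + K) =
      ENNReal.ofReal (ε / 2 * m t ^ 2) + epos (φ (u t) + K) := by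
  have hε := h.hε
  exact epos_add_of_nonneg (by positivity) hK

lemma aemeasurable_ofReal_m (h : GoodCurve φ ε B q u m) :
    AEMeasurable (fun t => ENNReal.ofReal (ε / 2 * m t ^ 2)) (expMeasure ε) :=
  ((h.aemeasurable_m.pow_const 2).const_mul _).ennreal_ofReal

/-- A bound on the energy controls the kinetic part and the potential part separately. -/
lemma bound (h : GoodCurve φ ε B q u m) {c : ℝ} (hc : WEDfun φ ε u m ≤ c) :
    0 ≤ c + q ∧ ENNReal.ofReal (ε / 4) * (∫⁻ t, ENNReal.ofReal (m t ^ 2) ∂expMeasure ε) +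
      ∫⁻ t, epos (φ (u t) + ((B * dist (u t) (u 0) ^ 2 + q : ℝ) : EReal)) ∂expMeasure ε ≤
      ENNReal.ofReal (c + q) := by
  have := isProbabilityMeasure_expMeasure h.hε
  have hB := h.hB
  have hε := h.hε
  obtain ⟨hP, hPN⟩ := (h.WEDfun_le_iff c).1 hc
  have hN := h.neg_lt_top.ne
  have hR := h.lintegral_neg_lt_top.ne
  have key := lintegral_epos_weighted (μ := expMeasure ε) (w := fun _ => 1) aemeasurable_const
    h.aemeasurable_integrand
    (r := fun t => B * dist (u t) (u 0) ^ 2 + q) (fun t => add_nonneg (by positivity) h.hq)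
    (Eventually.of_forall fun t _ => h.low_integrand (h.low _))
  simp only [one_mul] at key
  simp_rw [fun t => h.epos_integrand_add (h.low (u t))] at key
  rw [lintegral_add_left' h.aemeasurable_ofReal_m] at key
  have hRle : ∫⁻ t, ENNReal.ofReal (B * dist (u t) (u 0) ^ 2 + q) ∂expMeasure ε ≤
      ENNReal.ofReal (ε / 4) * (∫⁻ t, ENNReal.ofReal (m t ^ 2) ∂expMeasure ε) +
        ENNReal.ofReal q := by
    simp_rw [fun t => ENNReal.ofReal_add (by positivity : 0 ≤ B * dist (u t) (u 0) ^ 2) h.hq]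
    rw [lintegral_add_right _ measurable_const]
    simpa using h.lintegral_dist_le
  have hkin : ∫⁻ t, ENNReal.ofReal (ε / 2 * m t ^ 2) ∂expMeasure ε =
      ENNReal.ofReal (ε / 2) * (∫⁻ t, ENNReal.ofReal (m t ^ 2) ∂expMeasure ε) := by
    simp_rw [ENNReal.ofReal_mul (by positivity : 0 ≤ ε / 2)]
    rw [lintegral_const_mul' _ _ ENNReal.ofReal_ne_top]
  rw [hkin] at key
  have hM := h.fin.ne
  generalize (∫⁻ t, epos (wedIntegrand φ ε u m t) ∂expMeasure ε) = P at *
  generalize (∫⁻ t, epos (-wedIntegrand φ ε u m t) ∂expMeasure ε) = N at *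
  generalize (∫⁻ t, ENNReal.ofReal (m t ^ 2) ∂expMeasure ε) = M at *
  generalize (∫⁻ t, ENNReal.ofReal (B * dist (u t) (u 0) ^ 2 + q) ∂expMeasure ε) = R at *
  generalize (∫⁻ t, epos (φ (u t) + ((B * dist (u t) (u 0) ^ 2 + q : ℝ) : EReal))
    ∂expMeasure ε) = Φ at *
  have hΦ : Φ ≠ ⊤ := by
    rintro rfl
    have : P + R ≠ ⊤ := ENNReal.add_ne_top.2 ⟨hP, hR⟩
    rw [key] at this
    simp at this
  have hq := h.hq
  lift P to NNReal using hP
  lift N to NNReal using hN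
  lift M to NNReal using hM
  lift R to NNReal using hR
  lift Φ to NNReal using hΦ
  have k1 := congrArg ENNReal.toReal key
  have k2 := ENNReal.toReal_mono (by finiteness) hRle
  rw [ENNReal.toReal_add (by finiteness) (by finiteness), ENNReal.toReal_add (by finiteness) (by finiteness),
    ENNReal.toReal_add (by finiteness) (by finiteness), ENNReal.toReal_mul,
    ENNReal.toReal_ofReal (by positivity)] at k1
  rw [ENNReal.toReal_add (by finiteness) (by finiteness), ENNReal.toReal_mul,
    ENNReal.toReal_ofReal (by positivity), ENNReal.toReal_ofReal hq] at k2
  have h0 : 0 ≤ c + q := by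
    have h1 := mul_nonneg (by positivity : 0 ≤ ε / 4) M.coe_nonneg
    have h2 := Φ.coe_nonneg
    simp only [ENNReal.coe_toReal] at *
    linarith
  refine ⟨h0, ?_⟩
  rw [ENNReal.le_ofReal_iff_toReal_le (by finiteness) h0,
    ENNReal.toReal_add (by finiteness) (by finiteness), ENNReal.toReal_mul,
    ENNReal.toReal_ofReal (by positivity)]
  simp only [ENNReal.coe_toReal] at *
  linarith

/-- Any energy bound `c` satisfies `0 ≤ c + q` by `bound`, so the energy cannot drop below `-q`. -/
lemma neg_le_WEDfun (h : GoodCurve φ ε B q u m) : ((-q : ℝ) : EReal) ≤ WEDfun φ ε u m := by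
  by_contra! hlt
  obtain ⟨c, hc1, hc2⟩ := EReal.lt_iff_exists_real_btwn.1 hlt
  have hc2' : c < -q := by exact_mod_cast hc2
  linarith [(h.bound hc1.le).1]

/-- The part of the energy carried by bounded times, after adding a constant `K` that makes the
integrand nonnegative there. -/
def headEnergy (φ : X → EReal) (ε K R : ℝ) (u : ℝ → X) (m : ℝ → ℝ) : ℝ≥0∞ :=
  (∫⁻ t, headWeight ε R t * ENNReal.ofReal (ε / 2 * m t ^ 2) ∂expMeasure ε) +
    ∫⁻ t, headWeight ε R t * epos (φ (u t) + K) ∂expMeasure ε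

/-- Rewriting of the head of the integrand through its nonnegative translate by `K`, without
subtracting possibly infinite integrals. -/
lemma head_identity (h : GoodCurve φ ε B q u m) {K R : ℝ} (hK0 : 0 ≤ K)
    (hK : ∀ t, 0 < t → t < R → ((-K : ℝ) : EReal) ≤ φ (u t)) :
    ∫⁻ t, headWeight ε R t * epos (wedIntegrand φ ε u m t) ∂expMeasure ε +
        ENNReal.ofReal K * ∫⁻ t, headWeight ε R t ∂expMeasure ε =
      ∫⁻ t, headWeight ε R t * epos (-wedIntegrand φ ε u m t) ∂expMeasure ε +
        headEnergy φ ε K R u m := by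
  have hpos : ∀ᵐ t ∂expMeasure ε, 0 < t :=
    (expMeasure_absolutelyContinuous ε).ae_le (ae_restrict_mem measurableSet_Ioi)
  have hw : ∀ t, headWeight ε R t ≠ 0 → t < R := fun t ht => by
    by_contra! hR
    exact ht (by rw [headWeight, tailWeight_of_le h.hε hR, tsub_self])
  have key := lintegral_epos_weighted (μ := expMeasure ε) (w := headWeight ε R)
    (measurable_headWeight ε R).aemeasurable h.aemeasurable_integrand (r := fun _ => K)
    (fun _ => hK0) (by
      filter_upwards [hpos] with t ht0 ht
      exact h.low_integrand (hK t ht0 (hw t ht)))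
  rw [lintegral_mul_const _ (measurable_headWeight ε R), mul_comm _ (ENNReal.ofReal K)] at key
  rw [key, headEnergy]
  have h1 : AEMeasurable (fun t => headWeight ε R t * ENNReal.ofReal (ε / 2 * m t ^ 2))
      (expMeasure ε) := (measurable_headWeight ε R).aemeasurable.mul h.aemeasurable_ofReal_m
  rw [← lintegral_add_left' h1]
  congr 1
  refine lintegral_congr_ae ?_
  filter_upwards [hpos] with t ht0
  by_cases h0 : headWeight ε R t = 0
  · simp [h0]
  · rw [h.epos_integrand_add (hK t ht0 (hw t h0)), mul_add]

/-- The tail of the energy is at least `-q` times the mass of the tail. -/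
lemma tail_neg_le (h : GoodCurve φ ε B q u m) (R : ℝ) :
    ∫⁻ t, tailWeight ε R t * epos (-wedIntegrand φ ε u m t) ∂expMeasure ε ≤
      ∫⁻ t, tailWeight ε R t * epos (wedIntegrand φ ε u m t) ∂expMeasure ε +
        ENNReal.ofReal q * ∫⁻ t, tailWeight ε R t ∂expMeasure ε := by
  have hB := h.hB
  have hwm := measurable_tailWeight ε R
  have key := lintegral_epos_weighted (μ := expMeasure ε) (w := tailWeight ε R)
    hwm.aemeasurable h.aemeasurable_integrand
    (r := fun t => B * dist (u t) (u 0) ^ 2 + q) (fun t => add_nonneg (by positivity) h.hq)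
    (Eventually.of_forall fun t _ => h.low_integrand (h.low _))
  have h1 : ∫⁻ t, tailWeight ε R t * ENNReal.ofReal (B * dist (u t) (u 0) ^ 2) ∂expMeasure ε ≤
      ∫⁻ t, tailWeight ε R t *
        epos (wedIntegrand φ ε u m t + ((B * dist (u t) (u 0) ^ 2 + q : ℝ) : EReal))
        ∂expMeasure ε := by
    refine (h.lintegral_tail_dist_le R).trans (lintegral_mono fun t => ?_)
    rw [h.epos_integrand_add (h.low _)]
    gcongr
    exact le_self_add
  have h2 : ∫⁻ t, tailWeight ε R t * ENNReal.ofReal (B * dist (u t) (u 0) ^ 2) ∂expMeasure ε ≠ ⊤ := by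
    refine (lt_of_le_of_lt (lintegral_mono fun t => ?_) h.lintegral_neg_lt_top).ne
    refine (mul_le_mul_left (tailWeight_le_one ε R t) _).trans ?_
    rw [one_mul]
    exact ENNReal.ofReal_le_ofReal (by linarith [h.hq])
  have h3 : ∫⁻ t, tailWeight ε R t * ENNReal.ofReal (B * dist (u t) (u 0) ^ 2 + q) ∂expMeasure ε =
      ∫⁻ t, tailWeight ε R t * ENNReal.ofReal (B * dist (u t) (u 0) ^ 2) ∂expMeasure ε +
        ENNReal.ofReal q * ∫⁻ t, tailWeight ε R t ∂expMeasure ε := by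
    simp_rw [fun t => ENNReal.ofReal_add (by positivity : 0 ≤ B * dist (u t) (u 0) ^ 2) h.hq,
      mul_add]
    rw [lintegral_add_right _ (hwm.mul_const _), lintegral_mul_const _ hwm,
      mul_comm _ (ENNReal.ofReal q)]
  rw [h3, ← add_assoc, add_right_comm] at key
  refine (ENNReal.add_le_add_iff_right h2).1 ?_
  rw [key]
  gcongr

/-- The energy on bounded times is at most the total energy minus the lower bound `tail_neg_le` for
the tail; the last term accounts for the added constant `K`. -/
lemma head_bound (h : GoodCurve φ ε B q u m) {c K R : ℝ} (hc : WEDfun φ ε u m ≤ c) (hK0 : 0 ≤ K)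
    (hK : ∀ t, 0 < t → t < R → ((-K : ℝ) : EReal) ≤ φ (u t)) :
    headEnergy φ ε K R u m ≤ ENNReal.ofReal (c + q * (∫⁻ t, tailWeight ε R t ∂expMeasure ε).toReal +
      K * (∫⁻ t, headWeight ε R t ∂expMeasure ε).toReal) ∧
    0 ≤ c + q * (∫⁻ t, tailWeight ε R t ∂expMeasure ε).toReal +
      K * (∫⁻ t, headWeight ε R t ∂expMeasure ε).toReal := by
  have := isProbabilityMeasure_expMeasure h.hε
  have hq := h.hq
  obtain ⟨hP, hPN⟩ := (h.WEDfun_le_iff c).1 hc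
  have hN := h.neg_lt_top.ne
  have key := h.head_identity hK0 hK
  have tail := h.tail_neg_le R
  have hΘ : ∫⁻ t, tailWeight ε R t ∂expMeasure ε ≠ ⊤ := by
    refine (lt_of_le_of_lt (lintegral_mono fun t => tailWeight_le_one ε R t) ?_).ne
    simp
  have hX : ∫⁻ t, headWeight ε R t ∂expMeasure ε ≠ ⊤ := by
    refine (lt_of_le_of_lt (lintegral_mono fun t => headWeight_le_one ε R t) ?_).ne
    simp
  have hs1 := lintegral_split R (measurable_epos.comp_aemeasurable h.aemeasurable_integrand)
  have hs2 := lintegral_split R (measurable_epos.comp_aemeasurable h.aemeasurable_integrand.neg)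
  simp only [Function.comp, Pi.neg_apply] at hs1 hs2
  rw [hs1] at hP hPN
  rw [hs2] at hN hPN
  clear hs1 hs2
  generalize (∫⁻ t, headWeight ε R t * epos (wedIntegrand φ ε u m t) ∂expMeasure ε) = P1 at *
  generalize (∫⁻ t, tailWeight ε R t * epos (wedIntegrand φ ε u m t) ∂expMeasure ε) = P2 at *
  generalize (∫⁻ t, headWeight ε R t * epos (-wedIntegrand φ ε u m t) ∂expMeasure ε) = N1 at *
  generalize (∫⁻ t, tailWeight ε R t * epos (-wedIntegrand φ ε u m t) ∂expMeasure ε) = N2 at *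
  generalize (∫⁻ t, tailWeight ε R t ∂expMeasure ε) = Θ at *
  generalize (∫⁻ t, headWeight ε R t ∂expMeasure ε) = H at *
  generalize headEnergy φ ε K R u m = E at *
  obtain ⟨hP1, hP2⟩ := ENNReal.add_ne_top.1 hP
  obtain ⟨hN1, hN2⟩ := ENNReal.add_ne_top.1 hN
  have hE : E ≠ ⊤ := by
    rintro rfl
    have h1 : P1 + ENNReal.ofReal K * H ≠ ⊤ := by finiteness
    rw [key] at h1
    simp at h1
  have k1 := congrArg ENNReal.toReal key
  have k2 := ENNReal.toReal_mono (by finiteness) tail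
  rw [ENNReal.toReal_add (by finiteness) (by finiteness),
    ENNReal.toReal_add (by finiteness) (by finiteness), ENNReal.toReal_mul,
    ENNReal.toReal_ofReal hK0] at k1
  rw [ENNReal.toReal_add (by finiteness) (by finiteness), ENNReal.toReal_mul,
    ENNReal.toReal_ofReal hq] at k2
  rw [ENNReal.toReal_add hP1 hP2, ENNReal.toReal_add hN1 hN2] at hPN
  refine ⟨?_, by linarith [ENNReal.toReal_nonneg (a := E)]⟩
  rw [← ENNReal.ofReal_toReal hE]
  exact ENNReal.ofReal_le_ofReal (by linarith)

/-- If the energy on bounded times satisfies the bounds of `head_bound` for a sequence of horizons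
`R → ∞`, then the whole energy is bounded by `c`. -/
lemma WEDfun_le_of_head (h : GoodCurve φ ε B q u m) {c : ℝ} (K : ℕ → ℝ) (hK0 : ∀ R, 0 ≤ K R)
    (hK : ∀ R : ℕ, ∀ t : ℝ, 0 < t → t < R → ((-K R : ℝ) : EReal) ≤ φ (u t))
    (hb : ∀ R : ℕ, headEnergy φ ε (K R) R u m ≤
      ENNReal.ofReal (c + q * (∫⁻ t, tailWeight ε R t ∂expMeasure ε).toReal +
        K R * (∫⁻ t, headWeight ε R t ∂expMeasure ε).toReal) ∧
      0 ≤ c + q * (∫⁻ t, tailWeight ε R t ∂expMeasure ε).toReal +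
        K R * (∫⁻ t, headWeight ε R t ∂expMeasure ε).toReal) :
    WEDfun φ ε u m ≤ c := by
  have := isProbabilityMeasure_expMeasure h.hε
  rw [h.WEDfun_le_iff]
  have hN := h.neg_lt_top.ne
  set N := ∫⁻ t, epos (-wedIntegrand φ ε u m t) ∂expMeasure ε with hNdef
  let b : ℕ → ℝ := fun R => N.toReal + (c + q * (∫⁻ t, tailWeight ε R t ∂expMeasure ε).toReal)
  have hblim : Tendsto b atTop (𝓝 (N.toReal + c)) := by
    have := ((tendsto_lintegral_tailWeight h.hε).const_mul q).const_add c |>.const_add N.toReal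
    simpa [b] using this
  have hR : ∀ R : ℕ, (∫⁻ t, headWeight ε R t * epos (wedIntegrand φ ε u m t) ∂expMeasure ε) ≤
      ENNReal.ofReal (b R) ∧ 0 ≤ b R := by
    intro R
    have key := h.head_identity (hK0 R) (hK R)
    obtain ⟨hbR, hbR0⟩ := hb R
    have hN1 : ∫⁻ t, headWeight ε R t * epos (-wedIntegrand φ ε u m t) ∂expMeasure ε ≤ N := by
      refine lintegral_mono fun t => ?_
      simpa using mul_le_mul_left (headWeight_le_one ε R t) (epos (-wedIntegrand φ ε u m t))
    have hX : ∫⁻ t, headWeight ε R t ∂expMeasure ε ≠ ⊤ := by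
      refine (lt_of_le_of_lt (lintegral_mono fun t => headWeight_le_one ε R t) ?_).ne
      simp
    have hK0R := hK0 R
    simp only [b]
    generalize (∫⁻ t, headWeight ε R t * epos (wedIntegrand φ ε u m t) ∂expMeasure ε) = P1 at *
    generalize (∫⁻ t, headWeight ε R t * epos (-wedIntegrand φ ε u m t) ∂expMeasure ε) = N1 at *
    generalize (∫⁻ t, tailWeight ε R t ∂expMeasure ε).toReal = Θ at *
    generalize (∫⁻ t, headWeight ε R t ∂expMeasure ε) = H at *
    generalize headEnergy φ ε (K R) R u m = E at *
    have hE : E ≠ ⊤ := (hbR.trans_lt ENNReal.ofReal_lt_top).ne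
    have hN1' : N1 ≠ ⊤ := ne_top_of_le_ne_top hN hN1
    have hP1 : P1 ≠ ⊤ := by
      rintro rfl
      have h1 : N1 + E ≠ ⊤ := by finiteness
      rw [← key] at h1
      simp at h1
    have k1 := congrArg ENNReal.toReal key
    rw [ENNReal.toReal_add (by finiteness) (by finiteness),
      ENNReal.toReal_add (by finiteness) (by finiteness), ENNReal.toReal_mul,
      ENNReal.toReal_ofReal hK0R] at k1
    have k2 := ENNReal.toReal_mono hN hN1
    have k3 := ENNReal.toReal_le_of_le_ofReal hbR0 hbR
    rw [← ENNReal.ofReal_toReal hP1]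
    exact ⟨ENNReal.ofReal_le_ofReal (by linarith),
      by linarith [ENNReal.toReal_nonneg (a := P1)]⟩
  have h0 : 0 ≤ N.toReal + c := ge_of_tendsto' hblim fun R => (hR R).2
  have hP : (∫⁻ t, epos (wedIntegrand φ ε u m t) ∂expMeasure ε) ≤ ENNReal.ofReal (N.toReal + c) := by
    have hlim : ∀ t, Tendsto (fun R : ℕ => headWeight ε R t * epos (wedIntegrand φ ε u m t)) atTop
        (𝓝 (epos (wedIntegrand φ ε u m t))) := by
      intro t
      have h1 : Tendsto (fun R : ℕ => headWeight ε R t) atTop (𝓝 1) := by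
        simpa [headWeight] using
          ENNReal.Tendsto.sub tendsto_const_nhds (tendsto_tailWeight h.hε t) (Or.inl one_ne_top)
      simpa using ENNReal.Tendsto.mul_const h1 (Or.inl one_ne_zero)
    calc (∫⁻ t, epos (wedIntegrand φ ε u m t) ∂expMeasure ε) =
        ∫⁻ t, liminf (fun R : ℕ => headWeight ε R t * epos (wedIntegrand φ ε u m t)) atTop
          ∂expMeasure ε := by simp_rw [fun t => (hlim t).liminf_eq]
      _ ≤ liminf (fun R : ℕ => ∫⁻ t, headWeight ε R t * epos (wedIntegrand φ ε u m t)
          ∂expMeasure ε) atTop := lintegral_liminf_le' fun R =>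
            (measurable_headWeight ε R).aemeasurable.mul
              (measurable_epos.comp_aemeasurable h.aemeasurable_integrand)
      _ ≤ liminf (fun R : ℕ => ENNReal.ofReal (b R)) atTop :=
          liminf_le_liminf (Eventually.of_forall fun R => (hR R).1)
      _ = ENNReal.ofReal (N.toReal + c) :=
          ((ENNReal.continuous_ofReal.tendsto _).comp hblim).liminf_eq
  exact ⟨(hP.trans_lt ENNReal.ofReal_lt_top).ne, ENNReal.toReal_le_of_le_ofReal h0 hP⟩

end GoodCurve
end WED

namespace WED

/-! ### Lower semicontinuity of the kinetic energy -/

section Kinetic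

variable {X : Type*} [MetricSpace X]

lemma measurable_quotient {u : ℝ → X} (hu : ContinuousOn u (Ici 0)) {k : ℝ} (hk : 0 < k)
    {W : ℝ → ℝ≥0∞} (hW : Measurable W) :
    AEMeasurable (fun t => ENNReal.ofReal ((dist (u (t - k)) (u t) / k) ^ 2) * W t)
      (volume.restrict (Ioi k)) := by
  have h1 : ContinuousOn (fun t => u (t - k)) (Ioi k) := by
    refine hu.comp (by fun_prop) fun t ht => ?_
    have : k < t := ht
    exact mem_Ici.2 (by linarith)
  have h2 : ContinuousOn u (Ioi k) := hu.mono fun t ht => mem_Ici.2 (hk.le.trans (le_of_lt ht))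
  have h3 : ContinuousOn (fun t => dist (u (t - k)) (u t)) (Ioi k) :=
    continuous_dist.comp_continuousOn (h1.prodMk h2)
  have h4 : AEMeasurable (fun t => dist (u (t - k)) (u t)) (volume.restrict (Ioi k)) :=
    h3.aemeasurable measurableSet_Ioi
  exact ((h4.div_const k).pow_const 2).ennreal_ofReal.mul hW.aemeasurable

variable {σ : TopologicalSpace X}

/-- By (MT1), difference quotients are lower semicontinuous under σ-convergence. -/
lemma Compatible.quotient_le_liminf (hc : Compatible σ) {a b : ℕ → X} {x y : X}
    (ha : Tendsto a atTop (@nhds X σ x)) (hb : Tendsto b atTop (@nhds X σ y)) {k : ℝ} (hk : 0 < k)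
    {w : ℝ≥0∞} (hw : w ≠ ⊤) :
    ENNReal.ofReal ((dist x y / k) ^ 2) * w ≤
      liminf (fun n => ENNReal.ofReal ((dist (a n) (b n) / k) ^ 2) * w) atTop := by
  have h1 : ∀ i : ℕ, ENNReal.ofReal ((max (dist x y - 1 / ((i:ℝ) + 1)) 0 / k) ^ 2) * w ≤
      liminf (fun n => ENNReal.ofReal ((dist (a n) (b n) / k) ^ 2) * w) atTop := by
    intro i
    refine le_liminf_of_le (by isBoundedDefault) ?_
    filter_upwards [hc.eventually_dist_le ha hb (η := 1 / ((i:ℝ) + 1)) (by positivity)] with n hn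
    gcongr
    exact max_le (by linarith) dist_nonneg
  have h2 : Tendsto (fun i : ℕ => max (dist x y - 1 / ((i:ℝ) + 1)) 0) atTop (𝓝 (dist x y)) := by
    have := ((tendsto_one_div_add_atTop_nhds_zero_nat (𝕜 := ℝ)).const_sub (dist x y)).max
      (tendsto_const_nhds (x := (0:ℝ)))
    simpa using this
  have h3 := (ENNReal.continuous_ofReal.tendsto _).comp ((h2.div_const k).pow 2)
  exact le_of_tendsto' (ENNReal.Tendsto.mul_const h3 (Or.inr hw)) h1

/-- Fatou's lemma for difference quotients of a σ-pointwise convergent sequence of curves. -/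
lemma Compatible.lintegral_quotient_le_liminf (hc : Compatible σ) {u : ℕ → ℝ → X} {m : ℕ → ℝ → ℝ}
    {v : ℝ → X} (hu : ∀ n, IsMetricDerivOn (u n) (m n) (Ici 0))
    (hv : ∀ t, 0 ≤ t → Tendsto (fun n => u n t) atTop (@nhds X σ (v t))) {k : ℝ} (hk : 0 < k)
    {W : ℝ → ℝ≥0∞} (hWm : Measurable W) (hW : ∀ s t, 0 < s → s ≤ t → W t ≤ W s)
    (hWt : ∀ t, W t ≠ ⊤) :
    ∫⁻ t in Ioi k, ENNReal.ofReal ((dist (v (t - k)) (v t) / k) ^ 2) * W t ≤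
      liminf (fun n => ∫⁻ t in Ioi 0, ENNReal.ofReal (m n t ^ 2) * W t) atTop := by
  calc ∫⁻ t in Ioi k, ENNReal.ofReal ((dist (v (t - k)) (v t) / k) ^ 2) * W t
      ≤ ∫⁻ t in Ioi k, liminf (fun n =>
          ENNReal.ofReal ((dist (u n (t - k)) (u n t) / k) ^ 2) * W t) atTop := by
        refine setLIntegral_mono' measurableSet_Ioi fun t ht => ?_
        have ht' : k < t := ht
        exact hc.quotient_le_liminf (hv _ (by linarith)) (hv _ (by linarith)) hk (hWt t)
    _ ≤ liminf (fun n => ∫⁻ t in Ioi k,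
          ENNReal.ofReal ((dist (u n (t - k)) (u n t) / k) ^ 2) * W t) atTop :=
        lintegral_liminf_le' fun n => measurable_quotient (hu n).continuousOn hk hWm
    _ ≤ _ := liminf_le_liminf (Eventually.of_forall fun n =>
        (hu n).lintegral_quotient_le hk hWm hW)

end Kinetic

/-- Bounds on the difference quotients pass to the metric derivative, by Fatou's lemma along steps
`κ k → 0`. -/
lemma IsMetricDerivOn.lintegral_le_of_quotient {X : Type*} [MetricSpace X] {v : ℝ → X} {m : ℝ → ℝ}
    (h : IsMetricDerivOn v m (Ici 0)) {W : ℝ → ℝ≥0∞} (hWm : Measurable W) (hWt : ∀ t, W t ≠ ⊤)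
    {L : ℝ≥0∞} (hL : ∀ k : ℝ, 0 < k →
      ∫⁻ t in Ioi k, ENNReal.ofReal ((dist (v (t - k)) (v t) / k) ^ 2) * W t ≤ L) :
    ∫⁻ t in Ioi 0, ENNReal.ofReal (m t ^ 2) * W t ≤ L := by
  let κ : ℕ → ℝ := fun k => 1 / ((k:ℝ) + 1)
  have hκ0 : ∀ k, 0 < κ k := fun k => by positivity
  have hκ : Tendsto κ atTop (𝓝 0) := tendsto_one_div_add_atTop_nhds_zero_nat
  let D : ℕ → ℝ → ℝ≥0∞ := fun k => (Ioi (κ k)).indicator fun t =>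
    ENNReal.ofReal ((dist (v (t - κ k)) (v t) / κ k) ^ 2) * W t
  have hle : ∀ᵐ t ∂volume.restrict (Ioi 0), ENNReal.ofReal (m t ^ 2) * W t ≤
      liminf (fun k => D k t) atTop := by
    have hlim := h.limit
    rw [← restrict_Ioi_eq_restrict_Ici] at hlim
    filter_upwards [hlim, ae_restrict_mem measurableSet_Ioi] with t ht h0
    have h0' : 0 < t := h0
    have h1 : Tendsto (fun k => t - κ k) atTop (𝓝[Ici 0 \ {t}] t) := by
      refine tendsto_nhdsWithin_iff.2 ⟨by simpa using hκ.const_sub t, ?_⟩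
      filter_upwards [hκ.eventually_lt_const h0'] with k hk
      have := hκ0 k
      refine ⟨mem_Ici.2 (by linarith), ?_⟩
      simp only [mem_singleton_iff]
      linarith
    have h2 := (ht.comp h1).pow 2
    have h3 := ENNReal.Tendsto.mul_const ((ENNReal.continuous_ofReal.tendsto _).comp h2)
      (Or.inr (hWt t))
    rw [← h3.liminf_eq]
    refine liminf_le_liminf ?_
    filter_upwards [hκ.eventually_lt_const h0'] with k hk
    have hk' : t ∈ Ioi (κ k) := hk
    simp only [D, indicator_of_mem hk', Function.comp]
    rw [sub_sub_cancel_left, abs_neg, abs_of_pos (hκ0 k)]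
  have hDm : ∀ k, AEMeasurable (D k) (volume.restrict (Ioi 0)) := fun k => by
    have h1 := measurable_quotient h.continuousOn (hκ0 k) hWm
    exact ((aemeasurable_indicator_iff measurableSet_Ioi).2 h1).mono_measure Measure.restrict_le_self
  calc _ ≤ ∫⁻ t in Ioi 0, liminf (fun k => D k t) atTop := lintegral_mono_ae hle
    _ ≤ liminf (fun k => ∫⁻ t in Ioi 0, D k t) atTop := lintegral_liminf_le' hDm
    _ ≤ liminf (fun _ : ℕ => L) atTop := by
        refine liminf_le_liminf (Eventually.of_forall fun k => le_trans ?_ (hL _ (hκ0 k)))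
        simp only [D]
        rw [lintegral_indicator measurableSet_Ioi, Measure.restrict_restrict measurableSet_Ioi]
        exact lintegral_mono_set inter_subset_left
    _ = L := by simp

/-- Lower semicontinuity of weighted kinetic energies, for decreasing weights. -/
lemma Compatible.lintegral_le_liminf {X : Type*} [MetricSpace X] {σ : TopologicalSpace X}
    (hc : Compatible σ) {u : ℕ → ℝ → X} {m : ℕ → ℝ → ℝ}
    {v : ℝ → X} {mv : ℝ → ℝ} (hu : ∀ n, IsMetricDerivOn (u n) (m n) (Ici 0))
    (hv : ∀ t, 0 ≤ t → Tendsto (fun n => u n t) atTop (@nhds X σ (v t)))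
    (hmv : IsMetricDerivOn v mv (Ici 0))
    {W : ℝ → ℝ≥0∞} (hWm : Measurable W) (hW : ∀ s t, 0 < s → s ≤ t → W t ≤ W s)
    (hWt : ∀ t, W t ≠ ⊤) :
    ∫⁻ t in Ioi 0, ENNReal.ofReal (mv t ^ 2) * W t ≤
      liminf (fun n => ∫⁻ t in Ioi 0, ENNReal.ofReal (m n t ^ 2) * W t) atTop :=
  hmv.lintegral_le_of_quotient hWm hWt fun _ hk =>
    hc.lintegral_quotient_le_liminf hu hv hk hWm hW hWt

/-! ### Regularity of limits -/

/-- Curves with kinetic energy at most `L` on `[0, T]` are `1/2`-Hölder there, uniformly. -/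
lemma IsMetricDerivOn.dist_sq_le {X : Type*} [MetricSpace X] {u : ℝ → X} {m : ℝ → ℝ}
    (h : IsMetricDerivOn u m (Ici 0)) {s t T L : ℝ} (hs : 0 ≤ s) (hst : s ≤ t) (htT : t ≤ T)
    (hL0 : 0 ≤ L) (hL : ∫⁻ r in Ioc 0 T, ENNReal.ofReal (m r ^ 2) ≤ ENNReal.ofReal L) :
    dist (u s) (u t) ^ 2 ≤ (t - s) * L := by
  have h1 := h.ofReal_dist_sq_le' hs hst
  have h2 : ∫⁻ r in Ioc s t, ENNReal.ofReal (m r ^ 2) ≤ ENNReal.ofReal L :=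
    (lintegral_mono_set (Ioc_subset_Ioc hs htT)).trans hL
  have h3 := h1.trans (mul_le_mul_right h2 _)
  rw [← ENNReal.ofReal_mul (by linarith)] at h3
  exact (ENNReal.ofReal_le_ofReal_iff (mul_nonneg (by linarith) hL0)).1 h3

/-- Absolute continuity, uniform among curves with kinetic energy at most `L`: Cauchy–Schwarz on
each interval, followed by Young's inequality with parameter `τ`. -/
lemma IsMetricDerivOn.sum_dist_le {X : Type*} [MetricSpace X] {u : ℝ → X} {m : ℝ → ℝ}
    (h : IsMetricDerivOn u m (Ici 0)) {T L τ : ℝ} (hT : 0 ≤ T) (hτ : 0 < τ)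
    (hL0 : 0 ≤ L) (hL : ∫⁻ r in Ioc 0 T, ENNReal.ofReal (m r ^ 2) ≤ ENNReal.ofReal L)
    {E : ℕ × (ℕ → ℝ × ℝ)} (hE : E ∈ AbsolutelyContinuousOnInterval.disjWithin 0 T) :
    ∑ i ∈ Finset.range E.1, dist (u (E.2 i).1) (u (E.2 i).2) ≤
      τ / 2 * L + 1 / (2 * τ) * ∑ i ∈ Finset.range E.1, dist (E.2 i).1 (E.2 i).2 := by
  obtain ⟨N, I⟩ := E
  let J : ℕ → ℝ≥0∞ := fun i => ∫⁻ r in uIoc (I i).1 (I i).2, ENNReal.ofReal (m r ^ 2)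
  have hJ : ∑ i ∈ Finset.range N, J i ≤ ENNReal.ofReal L := by
    have h1 := lintegral_biUnion_finset (μ := volume) hE.2 (fun i _ => measurableSet_uIoc)
      (fun r => ENNReal.ofReal (m r ^ 2))
    have h2 := AbsolutelyContinuousOnInterval.biUnion_uIoc_subset_of_mem_disjWithin hE
    rw [uIoc_of_le hT] at h2
    exact h1.symm.le.trans ((lintegral_mono_set h2).trans hL)
  have hJi : ∀ i ∈ Finset.range N, J i ≤ ENNReal.ofReal L := fun i hi =>
    (Finset.single_le_sum (fun _ _ => zero_le) hi).trans hJ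
  have hJr : ∑ i ∈ Finset.range N, (J i).toReal ≤ L := by
    rw [← ENNReal.toReal_sum fun i hi => ((hJi i hi).trans_lt ENNReal.ofReal_lt_top).ne]
    exact ENNReal.toReal_le_of_le_ofReal hL0 hJ
  have hd : ∀ i ∈ Finset.range N, dist (u (I i).1) (u (I i).2) ≤
      τ / 2 * (J i).toReal + 1 / (2 * τ) * dist (I i).1 (I i).2 := by
    intro i hi
    have hmem := hE.1 i hi
    rw [uIcc_of_le hT] at hmem
    have key : ∀ a b : ℝ, 0 ≤ a → a ≤ b → (∫⁻ r in Ioc a b, ENNReal.ofReal (m r ^ 2)) ≠ ⊤ →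
        dist (u a) (u b) ≤ τ / 2 * (∫⁻ r in Ioc a b, ENNReal.ofReal (m r ^ 2)).toReal +
          1 / (2 * τ) * (b - a) := by
      intro a b ha hab hfin
      have h1 := h.ofReal_dist_sq_le' ha hab
      rw [← ENNReal.ofReal_toReal hfin, ← ENNReal.ofReal_mul (by linarith),
        ENNReal.ofReal_le_ofReal_iff (mul_nonneg (by linarith) ENNReal.toReal_nonneg)] at h1
      have hY0 : 0 ≤ (∫⁻ r in Ioc a b, ENNReal.ofReal (m r ^ 2)).toReal := ENNReal.toReal_nonneg
      generalize (∫⁻ r in Ioc a b, ENNReal.ofReal (m r ^ 2)).toReal = Y at h1 hY0 ⊢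
      have hY : 0 ≤ τ / 2 * Y + 1 / (2 * τ) * (b - a) :=
        add_nonneg (by positivity) (mul_nonneg (by positivity) (by linarith))
      refine abs_le_of_sq_le_sq' ?_ hY |>.2
      refine h1.trans ?_
      have e : (τ / 2 * Y + 1 / (2 * τ) * (b - a)) ^ 2 - (b - a) * Y =
          (τ / 2 * Y - 1 / (2 * τ) * (b - a)) ^ 2 := by field_simp; ring
      nlinarith [sq_nonneg (τ / 2 * Y - 1 / (2 * τ) * (b - a))]
    have hfin : J i ≠ ⊤ := ((hJi i hi).trans_lt ENNReal.ofReal_lt_top).ne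
    simp only [J] at hfin ⊢
    rcases le_total (I i).1 (I i).2 with hab | hab
    · rw [uIoc_of_le hab] at hfin ⊢
      rw [dist_comm (I i).1, Real.dist_eq, abs_of_nonneg (by linarith)]
      exact key _ _ hmem.1.1 hab hfin
    · rw [uIoc_of_ge hab] at hfin ⊢
      rw [Real.dist_eq, abs_of_nonneg (by linarith), dist_comm]
      exact key _ _ hmem.2.1 hab hfin
  calc _ ≤ ∑ i ∈ Finset.range N, (τ / 2 * (J i).toReal + 1 / (2 * τ) * dist (I i).1 (I i).2) :=
        Finset.sum_le_sum hd
    _ = τ / 2 * ∑ i ∈ Finset.range N, (J i).toReal +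
        1 / (2 * τ) * ∑ i ∈ Finset.range N, dist (I i).1 (I i).2 := by
        rw [Finset.sum_add_distrib, Finset.mul_sum, Finset.mul_sum]
    _ ≤ _ := by gcongr

/-- Local `1/2`-Hölder continuity on `[0, ∞)` gives continuity on `ℝ`, for curves extended by their
value at `0`. -/
lemma continuous_of_sq_le {X : Type*} [MetricSpace X] {v : ℝ → X} {Λ : ℝ → ℝ}
    (hv : ∀ t, v t = v (max t 0))
    (h : ∀ s t T, 0 ≤ s → s ≤ t → t ≤ T → dist (v s) (v t) ^ 2 ≤ (t - s) * Λ T) : Continuous v := by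
  have h1 : ContinuousOn v (Ici 0) := by
    intro t ht
    have ht0 : (0:ℝ) ≤ t := ht
    rw [ContinuousWithinAt, tendsto_iff_dist_tendsto_zero]
    have h2 : ∀ᶠ s in 𝓝[Ici 0] t, dist (v s) (v t) ≤ √(|s - t| * Λ (t + 1)) := by
      filter_upwards [self_mem_nhdsWithin, mem_nhdsWithin_of_mem_nhds (Iio_mem_nhds (lt_add_one t))]
        with s hs hs'
      have hs1 : s < t + 1 := hs'
      refine Real.le_sqrt_of_sq_le ?_
      rcases le_total s t with hst | hst
      · rw [abs_of_nonpos (by linarith), neg_sub]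
        exact h s t _ hs hst (by linarith)
      · rw [abs_of_nonneg (by linarith), dist_comm]
        exact h t s _ ht0 hst hs1.le
    refine squeeze_zero' (Eventually.of_forall fun _ => dist_nonneg) h2 ?_
    have h3 : Continuous fun s => √(|s - t| * Λ (t + 1)) := by fun_prop
    have h4 := h3.tendsto t
    simp only [sub_self, abs_zero, zero_mul, Real.sqrt_zero] at h4
    exact h4.mono_left nhdsWithin_le_nhds
  have h2 : v = fun t => v (max t 0) := funext hv
  rw [h2]
  exact h1.comp_continuous (by fun_prop) fun t => mem_Ici.2 (le_max_right _ _)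

/-- A σ-pointwise limit of curves with locally bounded kinetic energies belongs to `AC²_loc`. -/
lemma Compatible.exists_AC2Loc {X : Type*} [MetricSpace X] {σ : TopologicalSpace X}
    (hc : Compatible σ) {u : ℕ → ℝ → X} {m : ℕ → ℝ → ℝ}
    {v : ℝ → X} (hu : ∀ n, IsMetricDerivOn (u n) (m n) (Ici 0))
    (hv : ∀ t, 0 ≤ t → Tendsto (fun n => u n t) atTop (@nhds X σ (v t)))
    (hvm : ∀ t, v t = v (max t 0)) {Λ : ℝ → ℝ} (hΛ0 : ∀ T, 0 ≤ Λ T)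
    (hΛ : ∀ n T, ∫⁻ r in Ioc 0 T, ENNReal.ofReal (m n r ^ 2) ≤ ENNReal.ofReal (Λ T)) :
    ∃ mv, AC2LocOn v mv (Ici 0) := by
  refine exists_metricDeriv (continuous_of_sq_le (Λ := Λ) hvm fun s t T hs hst htT => ?_)
    (fun T hT => ?_) (fun T => ⟨ENNReal.ofReal (Λ T), ENNReal.ofReal_ne_top, fun k hk => ?_⟩)
  · have h0 : 0 ≤ (t - s) * Λ T := mul_nonneg (by linarith) (hΛ0 T)
    rw [← Real.le_sqrt dist_nonneg h0]
    exact hc.dist_le_of_forall (hv s hs) (hv t (hs.trans hst)) fun n =>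
      Real.le_sqrt_of_sq_le ((hu n).dist_sq_le hs hst htT (hΛ0 T) (hΛ n T))
  · rw [absolutelyContinuousOnInterval_iff]
    intro e he
    have hL := hΛ0 T
    set τ : ℝ := e / (Λ T + 1) with hτ
    have hτ0 : 0 < τ := by positivity
    refine ⟨τ * e / 2, by positivity, fun E hE hlen => ?_⟩
    have h1 : ∀ᶠ n in atTop, ∀ i ∈ Finset.range E.1, dist (v (E.2 i).1) (v (E.2 i).2) ≤
        dist (u n (E.2 i).1) (u n (E.2 i).2) + e / (8 * (E.1 + 1)) := by
      rw [Finset.eventually_all]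
      intro i hi
      have hmem := hE.1 i hi
      rw [uIcc_of_le hT] at hmem
      exact hc.eventually_dist_le (hv _ hmem.1.1) (hv _ hmem.2.1) (by positivity)
    obtain ⟨n, hn⟩ := h1.exists
    have h2 := (hu n).sum_dist_le hT hτ0 hL (hΛ n T) hE
    have h3 := Finset.sum_le_sum hn
    rw [Finset.sum_add_distrib, Finset.sum_const, Finset.card_range, nsmul_eq_mul] at h3
    have h4 : (E.1 : ℝ) * (e / (8 * (E.1 + 1))) ≤ e / 8 := by
      rw [mul_div_assoc', div_le_div_iff₀ (by positivity) (by positivity)]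
      nlinarith
    have h5 : τ / 2 * Λ T ≤ e / 2 := by
      rw [hτ, div_div, div_mul_eq_mul_div, div_le_div_iff₀ (by positivity) (by positivity)]
      nlinarith
    have h6 : 1 / (2 * τ) * ∑ i ∈ Finset.range E.1, dist (E.2 i).1 (E.2 i).2 ≤ e / 4 := by
      calc _ ≤ 1 / (2 * τ) * (τ * e / 2) := by gcongr
        _ = e / 4 := by field_simp; norm_num
    linarith
  · have h1 := hc.lintegral_quotient_le_liminf hu hv hk (W := (Iic T).indicator fun _ => 1)
      (measurable_const.indicator measurableSet_Iic)
      (fun s t _ hst => by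
        by_cases ht : t ∈ Iic T
        · rw [indicator_of_mem ht, indicator_of_mem (mem_Iic.2 (hst.trans ht))]
        · rw [indicator_of_notMem ht]; exact zero_le)
      (fun t => by by_cases ht : t ∈ Iic T <;> simp [ht])
    have e : ∀ (f : ℝ → ℝ≥0∞) (k : ℝ), ∫⁻ t in Ioi k, f t * (Iic T).indicator (fun _ => 1) t =
        ∫⁻ t in Ioc k T, f t := by
      intro f k
      rw [← Iic_inter_Ioi, ← Measure.restrict_restrict measurableSet_Iic,
        ← lintegral_indicator measurableSet_Iic]
      refine lintegral_congr fun t => ?_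
      by_cases ht : t ∈ Iic T <;> simp [ht]
    simp_rw [e] at h1
    refine h1.trans ?_
    calc _ ≤ liminf (fun _ : ℕ => ENNReal.ofReal (Λ T)) atTop :=
          liminf_le_liminf (Eventually.of_forall fun n => hΛ n T)
      _ = _ := by simp

end WED

namespace WED

/-! ### Admissible curves -/

lemma IsMetricDerivOn.tendsto_dist {X : Type*} [MetricSpace X] {u : ℝ → X} {m : ℝ → ℝ}
    (h : IsMetricDerivOn u m (Ici 0)) {s : ℕ → ℝ} {t : ℝ} (hs : Tendsto s atTop (𝓝 t)) :
    Tendsto (fun n => dist (u (max (s n) 0)) (u (max t 0))) atTop (𝓝 0) := by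
  have h1 : Continuous fun t => u (max t 0) :=
    h.continuousOn.comp_continuous (by fun_prop) fun t => mem_Ici.2 (le_max_right _ _)
  exact tendsto_iff_dist_tendsto_zero.1 ((h1.tendsto t).comp hs)

lemma exists_dist_le_of_tendsto {X : Type*} [MetricSpace X] {a : ℕ → X} {x : X}
    (h : Tendsto (fun n => dist (a n) x) atTop (𝓝 0)) : ∃ C : ℝ, ∀ n k, dist (a n) (a k) ≤ C := by
  obtain ⟨C, hC⟩ := h.bddAbove_range
  refine ⟨C + C, fun n k => (dist_triangle_right _ _ x).trans (add_le_add ?_ ?_)⟩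
  · exact hC (mem_range_self n)
  · exact hC (mem_range_self k)

section

variable {X : Type*} [MetricSpace X] {σ : TopologicalSpace X} {φ : X → EReal} {ustar : X}
  {A B ε : ℝ}

/-- `φ` is lower semicontinuous, hence Borel, along any `d`-continuous curve. -/
lemma LSCC.aemeasurable_comp (hφ : LSCC σ φ ustar A B) (hc : Compatible σ) {u : ℝ → X} {m : ℝ → ℝ}
    (h : IsMetricDerivOn u m (Ici 0)) : AEMeasurable (fun t => φ (u t)) (expMeasure ε) := by
  have h1 : LowerSemicontinuous fun t : ℝ => φ (u (max t 0)) := by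
    rw [lowerSemicontinuous_iff_isClosed_preimage]
    intro y
    refine IsSeqClosed.isClosed fun s t hs hst => ?_
    have hd := h.tendsto_dist hst
    refine (hφ.lsc _ _ (exists_dist_le_of_tendsto hd) (hc.tendsto_of_dist hd)).trans ?_
    exact liminf_le_of_frequently_le' (Frequently.of_forall hs)
  refine h1.measurable.aemeasurable.congr ?_
  have hpos : ∀ᵐ t ∂expMeasure ε, 0 < t :=
    (expMeasure_absolutelyContinuous ε).ae_le (ae_restrict_mem measurableSet_Ioi)
  filter_upwards [hpos] with t ht
  rw [max_eq_left ht.le]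

/-- Coercivity based at `u 0` provides the lower bound required of a `GoodCurve`. -/
lemma LSCC.goodCurve (hφ : LSCC σ φ ustar A B) (hc : Compatible σ) (hε : 0 < ε)
    (hεB : B ≤ 1 / (16 * ε)) {x : X} {u : ℝ → X} {m : ℝ → ℝ} (h : Admissible ε x u m) {q : ℝ}
    (hq : B * dist x ustar ^ 2 + A ≤ q) : GoodCurve φ ε B q u m where
  hε := hε
  hB := hφ.hB
  hεB := hεB
  hq := by
    have := mul_nonneg hφ.hB (sq_nonneg (dist x ustar))
    linarith [hφ.hA]
  deriv := h.2.1.1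
  fin := h.2.2
  meas := hφ.aemeasurable_comp hc h.2.1.1
  low y := by
    refine le_trans ?_ (hφ.coercive y (u 0))
    rw [h.1, EReal.coe_le_coe_iff]
    linarith

/-- A bound on the energy gives a local bound on the kinetic energy. -/
lemma GoodCurve.lintegral_Ioc_le {X : Type*} [MetricSpace X] {φ : X → EReal} {B q : ℝ} {u : ℝ → X}
    {m : ℝ → ℝ} (h : GoodCurve φ ε B q u m) {c : ℝ} (hc : WEDfun φ ε u m ≤ c) (T : ℝ) :
    ∫⁻ r in Ioc 0 T, ENNReal.ofReal (m r ^ 2) ≤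
      ENNReal.ofReal (4 * Real.exp (T / ε) * (c + q)) := by
  have hε := h.hε
  have h1 : ENNReal.ofReal (ε⁻¹ * Real.exp (-T / ε)) * ∫⁻ r in Ioc 0 T, ENNReal.ofReal (m r ^ 2) ≤
      ∫⁻ t, ENNReal.ofReal (m t ^ 2) ∂expMeasure ε := by
    rw [lintegral_expMeasure, ← lintegral_const_mul' _ _ ENNReal.ofReal_ne_top]
    refine le_trans ?_ (lintegral_mono_set (s := Ioc 0 T) Ioc_subset_Ioi_self)
    refine setLIntegral_mono' measurableSet_Ioc fun t ht => ?_
    have := ht.2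
    gcongr
  have h2 := (le_self_add.trans (h.bound hc).2)
  have h3 := mul_le_mul_right (mul_le_mul_right h1 (ENNReal.ofReal (ε / 4))|>.trans h2)
    (ENNReal.ofReal (4 * Real.exp (T / ε)))
  rw [← ENNReal.ofReal_mul (by positivity), ← mul_assoc, ← mul_assoc,
    ← ENNReal.ofReal_mul (by positivity), ← ENNReal.ofReal_mul (by positivity)] at h3
  have e : 4 * Real.exp (T / ε) * (ε / 4) * (ε⁻¹ * Real.exp (-T / ε)) = 1 := by
    rw [neg_div, Real.exp_neg]
    field_simp
  rwa [e, ENNReal.ofReal_one, one_mul] at h3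

/-- Every interval contains a time at which `φ` is bounded in terms of the energy. -/
lemma GoodCurve.exists_le {X : Type*} [MetricSpace X] {φ : X → EReal} {B q : ℝ}
    (hε : 0 < ε) (hB : 0 ≤ B) {a b : ℝ} (ha : 0 ≤ a) (hab : a < b) (c : ℝ) :
    ∃ C : ℝ, ∀ (u : ℝ → X) (m : ℝ → ℝ), GoodCurve φ ε B q u m → WEDfun φ ε u m ≤ c →
      ∃ s ∈ Ioo a b, φ (u s) ≤ C := by
  have := isProbabilityMeasure_expMeasure hε
  have hμ : expMeasure ε (Ioo a b) ≠ 0 := by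
    intro h0
    have := absolutelyContinuous_expMeasure hε h0
    rw [Measure.restrict_apply measurableSet_Ioo,
      inter_eq_left.2 (fun t ht => mem_Ioi.2 (ha.trans_lt ht.1)), Real.volume_Ioo] at this
    simp at this
    linarith
  let κ : ℝ≥0∞ := ENNReal.ofReal (c + q) / expMeasure ε (Ioo a b)
  have hκ : κ ≠ ⊤ := ENNReal.div_ne_top ENNReal.ofReal_ne_top hμ
  refine ⟨κ.toReal, fun u m h hc => ?_⟩
  have hb := (le_add_self.trans (h.bound hc).2)
  have hm : AEMeasurable (fun t => epos (φ (u t) + ((B * dist (u t) (u 0) ^ 2 + q : ℝ) : EReal)))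
      ((expMeasure ε).restrict (Ioo a b)) := by
    refine AEMeasurable.restrict (measurable_epos.comp_aemeasurable ?_)
    refine h.meas.add (measurable_coe_real_ereal.comp_aemeasurable ?_)
    exact ((h.aemeasurable_dist.pow_const 2).const_mul _).add_const _
  obtain ⟨s, hs, hle⟩ := exists_le_setLAverage hμ (measure_ne_top _ _) hm
  refine ⟨s, hs, ?_⟩
  rw [setLAverage_eq] at hle
  have h1 : epos (φ (u s) + ((B * dist (u s) (u 0) ^ 2 + q : ℝ) : EReal)) ≤ κ :=
    hle.trans (ENNReal.div_le_div_right ((setLIntegral_le_lintegral _ _).trans hb) _)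
  have hr : 0 ≤ B * dist (u s) (u 0) ^ 2 + q := add_nonneg (by positivity) h.hq
  generalize B * dist (u s) (u 0) ^ 2 + q = r at *
  generalize φ (u s) = z at *
  induction z with
  | bot => simp
  | top =>
    exfalso
    rw [EReal.top_add_coe, epos, if_pos rfl, top_le_iff] at h1
    exact hκ h1
  | coe z =>
    rw [← EReal.coe_add, epos_coe, ENNReal.ofReal_le_iff_le_toReal hκ] at h1
    exact EReal.coe_le_coe_iff.2 (by linarith)

/-! ### Compactness -/

/-- A family of locally uniformly Hölder curves with relatively compact values at some time
(depending on the curve) in each interval has a subsequence that converges pointwise in `σ`. -/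
lemma Compatible.exists_limit [CompleteSpace X] (hc : Compatible σ) {u : ℕ → ℝ → X} {Λ : ℝ → ℝ}
    (hΛ : ∀ n s t T, 0 ≤ s → s ≤ t → t ≤ T → dist (u n s) (u n t) ^ 2 ≤ (t - s) * Λ T)
    (hsel : ∀ a b : ℝ, 0 ≤ a → a < b → ∃ s : ℕ → ℝ, (∀ n, s n ∈ Ioo a b) ∧
      ∀ j : ℕ → ℕ, StrictMono j → ∃ (x : X) (l : ℕ → ℕ), StrictMono l ∧
        Tendsto (fun n => u (j (l n)) (s (j (l n)))) atTop (@nhds X σ x)) :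
    ∃ (j : ℕ → ℕ) (v : ℝ → X), StrictMono j ∧ (∀ t, v t = v (max t 0)) ∧
      ∀ t, 0 ≤ t → Tendsto (fun n => u (j n) t) atTop (@nhds X σ (v t)) := by
  -- The index `k` encodes the interval `(i/(l+1), (i+1)/(l+1))`, `(i, l) = unpair k`.
  choose s hs hsub using fun k : ℕ => hsel ((k.unpair.1 : ℝ) / ((k.unpair.2 : ℝ) + 1))
    (((k.unpair.1 : ℝ) + 1) / ((k.unpair.2 : ℝ) + 1)) (by positivity)
    (by gcongr; linarith)
  obtain ⟨j, hj, hjl⟩ := exists_diagonal (σ := σ) (fun k n => u n (s k n)) hsub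
  have hlim : ∀ t : ℝ, ∃ a, 0 ≤ t → Tendsto (fun n => u (j n) t) atTop (@nhds X σ a) := by
    intro t
    by_cases ht : 0 ≤ t
    swap
    · exact ⟨u 0 0, fun h => absurd h ht⟩
    suffices h : ∃ a, Tendsto (fun n => u (j n) t) atTop (@nhds X σ a) by
      obtain ⟨a, ha⟩ := h
      exact ⟨a, fun _ => ha⟩
    refine hc.exists_tendsto_of_approx fun r hr => ?_
    obtain ⟨l, hl⟩ := exists_nat_gt (Λ (t + 1) / r ^ 2)
    have hl1 : (0:ℝ) < (l:ℝ) + 1 := by positivity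
    let i := ⌊t * ((l:ℝ) + 1)⌋₊
    obtain ⟨a, ha⟩ := hjl (Nat.pair i l)
    refine ⟨_, a, ha, fun n => ?_⟩
    have h1 := hs (Nat.pair i l) (j n)
    rw [Nat.unpair_pair] at h1
    obtain ⟨h2, h3⟩ := h1
    simp only at h2 h3
    generalize s (Nat.pair i l) (j n) = r' at *
    rw [div_lt_iff₀ hl1] at h2
    rw [lt_div_iff₀ hl1] at h3
    have h4 : (i:ℝ) ≤ t * ((l:ℝ) + 1) := Nat.floor_le (by positivity)
    have h5 : t * ((l:ℝ) + 1) < i + 1 := Nat.lt_floor_add_one _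
    have hr0 : 0 ≤ r' := by
      by_contra! hneg
      have : r' * ((l:ℝ) + 1) < 0 := mul_neg_of_neg_of_pos hneg hl1
      have : (0:ℝ) ≤ i := by positivity
      linarith
    have hA : |t - r'| * ((l:ℝ) + 1) ≤ 1 := by
      rcases abs_cases (t - r') with ⟨h, _⟩ | ⟨h, _⟩ <;> rw [h] <;> nlinarith
    have hA1 : |t - r'| ≤ 1 := by
      refine le_trans ?_ hA
      have : (0:ℝ) ≤ |t - r'| * l := by positivity
      linarith
    have hd : dist (u (j n) t) (u (j n) r') ^ 2 ≤ |t - r'| * Λ (t + 1) := by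
      have hA2 := abs_le.1 hA1
      rcases le_total r' t with h | h
      · rw [dist_comm, abs_of_nonneg (by linarith)]
        exact hΛ _ _ _ _ hr0 h (by linarith)
      · rw [abs_of_nonpos (by linarith), neg_sub]
        exact hΛ _ _ _ _ ht h (by linarith)
    have h6 : |t - r'| * Λ (t + 1) ≤ r ^ 2 := by
      rw [div_lt_iff₀ (by positivity)] at hl
      have : |t - r'| * Λ (t + 1) ≤ |t - r'| * ((l + 1) * r ^ 2) := by
        gcongr
        nlinarith [sq_nonneg r]
      refine this.trans ?_
      rw [← mul_assoc]
      exact mul_le_of_le_one_left (sq_nonneg r) hA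
    exact (le_abs_self _).trans (abs_le_of_sq_le_sq (hd.trans h6) hr.le)
  choose v hv using hlim
  refine ⟨j, fun t => v (max t 0), hj, fun t => by simp, fun t ht => ?_⟩
  simp only [max_eq_left ht]
  exact hv t ht

end
end WED

namespace WED

/-! ### Lower semicontinuity of the energy and compactness of sublevels -/

lemma le_liminf_add_ennreal (f g : ℕ → ℝ≥0∞) :
    liminf f atTop + liminf g atTop ≤ liminf (fun n => f n + g n) atTop := by
  simp only [liminf_eq_iSup_iInf_of_nat]
  rw [ENNReal.iSup_add_iSup_of_monotone]
  · exact iSup_mono fun n => le_iInf₂ fun i hi => add_le_add (iInf₂_le i hi) (iInf₂_le i hi)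
  · exact fun a b hab => le_iInf₂ fun i hi => iInf₂_le i (hab.trans hi)
  · exact fun a b hab => le_iInf₂ fun i hi => iInf₂_le i (hab.trans hi)

lemma mul_epos_le_liminf {a : EReal} {b : ℕ → EReal} (h : a ≤ liminf b atTop) (K : ℝ) {w : ℝ≥0∞}
    (hw : w ≠ ⊤) : w * epos (a + K) ≤ liminf (fun n => w * epos (b n + K)) atTop := by
  let g : EReal → ℝ≥0∞ := fun z => w * epos (z + K)
  have hmono : Monotone g := fun z z' hz => by
    simp only [g, epos_eq]
    have h2 := EReal.toENNReal_le_toENNReal (add_le_add hz (le_refl (K : EReal)))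
    gcongr
  have hcont : Continuous g := by
    refine (ENNReal.continuous_const_mul hw).comp ?_
    rw [epos_eq]
    refine EReal.continuous_toENNReal.comp ?_
    refine continuous_iff_continuousAt.2 fun z => ?_
    exact (EReal.continuousAt_add (p := (z, (K : EReal))) (Or.inr (by simp)) (Or.inr (by simp))).comp
      (f := fun z : EReal => (z, (K : EReal))) (by fun_prop)
  have h1 : g (liminf b atTop) = liminf (g ∘ b) atTop :=
    hmono.map_liminf_of_continuousAt b hcont.continuousAt
  exact (hmono h).trans h1.le

section

variable {X : Type*} [MetricSpace X] {σ : TopologicalSpace X} {φ : X → EReal} {ustar : X}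
  {A B ε : ℝ}

/-- Lower semicontinuity of the energy on bounded times: the kinetic part uses that `headWeight`
and `e^{-t/ε}` are decreasing, the potential part is Fatou's lemma. -/
lemma LSCC.headEnergy_le_liminf (hφ : LSCC σ φ ustar A B) (hc : Compatible σ) (hε : 0 < ε)
    {u : ℕ → ℝ → X} {m : ℕ → ℝ → ℝ} {v : ℝ → X} {mv : ℝ → ℝ}
    (hu : ∀ n, IsMetricDerivOn (u n) (m n) (Ici 0))
    (hv : ∀ t, 0 ≤ t → Tendsto (fun n => u n t) atTop (@nhds X σ (v t)))
    (hbdd : ∀ t, 0 ≤ t → ∃ C : ℝ, ∀ n k, dist (u n t) (u k t) ≤ C)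
    (hmv : IsMetricDerivOn v mv (Ici 0)) (K R : ℝ) :
    GoodCurve.headEnergy φ ε K R v mv ≤
      liminf (fun n => GoodCurve.headEnergy φ ε K R (u n) (m n)) atTop := by
  have hpos : ∀ᵐ t ∂expMeasure ε, 0 < t :=
    (expMeasure_absolutelyContinuous ε).ae_le (ae_restrict_mem measurableSet_Ioi)
  have hfin : ∀ t, headWeight ε R t ≠ ⊤ := fun t =>
    ne_top_of_le_ne_top one_ne_top (headWeight_le_one ε R t)
  unfold GoodCurve.headEnergy
  refine le_trans (add_le_add ?_ ?_) (le_liminf_add_ennreal _ _)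
  · let W : ℝ → ℝ≥0∞ := fun t =>
      ENNReal.ofReal (ε⁻¹ * Real.exp (-t / ε)) * headWeight ε R t * ENNReal.ofReal (ε / 2)
    have e : ∀ f : ℝ → ℝ, ∫⁻ t, headWeight ε R t * ENNReal.ofReal (ε / 2 * f t ^ 2) ∂expMeasure ε =
        ∫⁻ t in Ioi 0, ENNReal.ofReal (f t ^ 2) * W t := by
      intro f
      rw [lintegral_expMeasure]
      refine lintegral_congr fun t => ?_
      rw [ENNReal.ofReal_mul (by positivity : 0 ≤ ε / 2)]
      simp only [W]
      ring
    simp_rw [e]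
    refine hc.lintegral_le_liminf hu hv hmv (W := W) ?_ (fun s t _ hst => ?_) fun t => ?_
    · exact (Measurable.mul (by fun_prop) (measurable_headWeight ε R)).mul_const _
    · simp only [W]
      have h1 : headWeight ε R t ≤ headWeight ε R s := by
        unfold headWeight
        exact tsub_le_tsub_left (tailWeight_mono hε hst) _
      gcongr
    · exact ENNReal.mul_ne_top (ENNReal.mul_ne_top ENNReal.ofReal_ne_top (hfin t))
        ENNReal.ofReal_ne_top
  · calc ∫⁻ t, headWeight ε R t * epos (φ (v t) + K) ∂expMeasure ε
        ≤ ∫⁻ t, liminf (fun n => headWeight ε R t * epos (φ (u n t) + K)) atTop ∂expMeasure ε := by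
          refine lintegral_mono_ae ?_
          filter_upwards [hpos] with t ht
          exact mul_epos_le_liminf (hφ.lsc _ _ (hbdd t ht.le) (hv t ht.le)) K (hfin t)
      _ ≤ liminf (fun n => ∫⁻ t, headWeight ε R t * epos (φ (u n t) + K) ∂expMeasure ε) atTop := by
          refine lintegral_liminf_le' fun n => ?_
          exact (measurable_headWeight ε R).aemeasurable.mul
            (measurable_epos.comp_aemeasurable ((hφ.aemeasurable_comp hc (hu n)).add_const _))

/-- Sequences of admissible curves with bounded initial points and converging energy bounds
subconverge pointwise in `σ` to an admissible curve, whose energy is at most the limit bound. -/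
lemma LSCC.compactness [CompleteSpace X] (hφ : LSCC σ φ ustar A B) (hc : Compatible σ) (hε : 0 < ε)
    (hεB : B ≤ 1 / (16 * ε)) {x : ℕ → X} {u : ℕ → ℝ → X} {m : ℕ → ℝ → ℝ}
    (hx : ∃ C : ℝ, ∀ n k, dist (x n) (x k) ≤ C) (hadm : ∀ n, Admissible ε (x n) (u n) (m n))
    {c : ℕ → ℝ} {c₀ : ℝ} (hc₀ : Tendsto c atTop (𝓝 c₀)) (hW : ∀ n, WEDfun φ ε (u n) (m n) ≤ c n) :
    ∃ (j : ℕ → ℕ) (v : ℝ → X) (mv : ℝ → ℝ), StrictMono j ∧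
      Tendsto (fun n => x (j n)) atTop (@nhds X σ (v 0)) ∧ Admissible ε (v 0) v mv ∧
      WEDfun φ ε v mv ≤ c₀ := by
  obtain ⟨C, hC⟩ := hx
  obtain ⟨cb, hcb⟩ := hc₀.bddAbove_range
  have hcb' : ∀ n, c n ≤ cb := fun n => hcb (mem_range_self n)
  have hWb : ∀ n, WEDfun φ ε (u n) (m n) ≤ cb := fun n =>
    (hW n).trans (EReal.coe_le_coe_iff.2 (hcb' n))
  let D : ℝ := C + dist (x 0) ustar
  have hD : ∀ n, dist (x n) ustar ≤ D := fun n =>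
    (dist_triangle _ (x 0) _).trans (add_le_add (hC n 0) le_rfl)
  let q : ℝ := B * D ^ 2 + A
  have hB := hφ.hB
  have hqle : ∀ y, dist y ustar ≤ D → B * dist y ustar ^ 2 + A ≤ q := fun y hy => by
    simp only [q]; gcongr
  have hg : ∀ n, GoodCurve φ ε B q (u n) (m n) := fun n =>
    hφ.goodCurve hc hε hεB (hadm n) (hqle _ (hD n))
  have hu : ∀ n, IsMetricDerivOn (u n) (m n) (Ici 0) := fun n => (hg n).deriv
  have hcq : 0 ≤ cb + q := ((hg 0).bound (hWb 0)).1
  let Λ : ℝ → ℝ := fun T => 4 * Real.exp (T / ε) * (cb + q)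
  have hΛ0 : ∀ T, 0 ≤ Λ T := fun T => by simp only [Λ]; positivity
  have hΛ : ∀ n T, ∫⁻ r in Ioc 0 T, ENNReal.ofReal (m n r ^ 2) ≤ ENNReal.ofReal (Λ T) :=
    fun n T => (hg n).lintegral_Ioc_le (hWb n) T
  have hH : ∀ n s t T, 0 ≤ s → s ≤ t → t ≤ T → dist (u n s) (u n t) ^ 2 ≤ (t - s) * Λ T :=
    fun n s t T hs hst htT => (hu n).dist_sq_le hs hst htT (hΛ0 T) (hΛ n T)
  have h0sq : ∀ n t T, 0 ≤ t → t ≤ T → dist (u n t) (u n 0) ^ 2 ≤ T * Λ T := fun n t T ht htT => by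
    have h1 := hH n 0 t T le_rfl ht htT
    rw [dist_comm]
    rw [sub_zero] at h1
    exact h1.trans (mul_le_mul_of_nonneg_right htT (hΛ0 T))
  have hbd : ∀ T, ∀ s s' n k, 0 ≤ s → s ≤ T → 0 ≤ s' → s' ≤ T →
      dist (u n s) (u k s') ≤ √(T * Λ T) + C + √(T * Λ T) := by
    intro T s s' n k hs hsT hs' hsT'
    refine (dist_triangle4 _ (u n 0) (u k 0) _).trans (add_le_add (add_le_add ?_ ?_) ?_)
    · exact Real.le_sqrt_of_sq_le (h0sq n s T hs hsT)
    · rw [(hadm n).1, (hadm k).1]; exact hC n k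
    · rw [dist_comm]; exact Real.le_sqrt_of_sq_le (h0sq k s' T hs' hsT')
  obtain ⟨j, v, hj, hvm, hv⟩ := hc.exists_limit (u := u) hH (by
    intro a b ha hab
    obtain ⟨E, hE⟩ := GoodCurve.exists_le (X := X) (φ := φ) (q := q) hε hB ha hab cb
    choose s hs hsE using fun n => hE (u n) (m n) (hg n) (hWb n)
    refine ⟨s, hs, fun j hj => ?_⟩
    have h0 : ∀ n, 0 ≤ s n := fun n => ha.trans (hs n).1.le
    exact hφ.cpt (fun n => u (j n) (s (j n))) ⟨E, fun n => hsE _⟩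
      ⟨_, fun n k => hbd b _ _ _ _ (h0 _) (hs _).2.le (h0 _) (hs _).2.le⟩)
  obtain ⟨mv, hmv⟩ := hc.exists_AC2Loc (fun n => hu (j n)) hv hvm hΛ0 fun n => hΛ (j n)
  have hv0 : Tendsto (fun n => x (j n)) atTop (@nhds X σ (v 0)) := by
    refine (hv 0 le_rfl).congr fun n => (hadm _).1
  have hvD : dist (v 0) ustar ≤ D :=
    hc.dist_le_of_forall hv0 (v := fun _ => ustar) tendsto_const_nhds fun n => hD _
  have hfin : (∫⁻ t, ENNReal.ofReal (mv t ^ 2) ∂expMeasure ε) < ⊤ := by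
    have e : ∀ f : ℝ → ℝ, ∫⁻ t, ENNReal.ofReal (f t ^ 2) ∂expMeasure ε =
        ∫⁻ t in Ioi 0, ENNReal.ofReal (f t ^ 2) * ENNReal.ofReal (ε⁻¹ * Real.exp (-t / ε)) :=
      fun f => by simp_rw [lintegral_expMeasure, mul_comm]
    have h1 := hc.lintegral_le_liminf (fun n => hu (j n)) hv hmv.1
      (W := fun t => ENNReal.ofReal (ε⁻¹ * Real.exp (-t / ε))) (by fun_prop)
      (fun s t _ hst => by gcongr) fun t => ENNReal.ofReal_ne_top
    simp_rw [← e] at h1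
    refine h1.trans_lt (lt_of_le_of_lt (liminf_le_of_frequently_le'
      (x := ENNReal.ofReal (4 / ε * (cb + q))) (Frequently.of_forall fun n => ?_))
      ENNReal.ofReal_lt_top)
    have h2 := mul_le_mul_right (le_self_add.trans ((hg (j n)).bound (hWb (j n))).2)
      (ENNReal.ofReal (4 / ε))
    rw [← mul_assoc, ← ENNReal.ofReal_mul (by positivity), ← ENNReal.ofReal_mul (by positivity)] at h2
    rwa [show 4 / ε * (ε / 4) = 1 by field_simp, ENNReal.ofReal_one, one_mul] at h2
  have hadmv : Admissible ε (v 0) v mv := ⟨rfl, hmv, hfin⟩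
  have hgv : GoodCurve φ ε B q v mv := hφ.goodCurve hc hε hεB hadmv (hqle _ hvD)
  refine ⟨j, v, mv, hj, hv0, hadmv, ?_⟩
  let K : ℕ → ℝ := fun R => B * (R * Λ R) + q
  have hK0 : ∀ R, 0 ≤ K R := fun R =>
    add_nonneg (mul_nonneg hB (mul_nonneg (by positivity) (hΛ0 _))) (hg 0).hq
  have hKle : ∀ (w : ℝ → X) (mw : ℝ → ℝ), GoodCurve φ ε B q w mw → ∀ (R : ℕ) (t : ℝ),
      dist (w t) (w 0) ^ 2 ≤ R * Λ R → ((-K R : ℝ) : EReal) ≤ φ (w t) := by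
    intro w mw hw R t hd
    refine le_trans (EReal.coe_le_coe_iff.2 ?_) (hw.low (w t))
    simp only [K]
    have := mul_le_mul_of_nonneg_left hd hB
    linarith
  have hKu : ∀ n, ∀ R : ℕ, ∀ t : ℝ, 0 < t → t < R → ((-K R : ℝ) : EReal) ≤ φ (u n t) :=
    fun n R t ht htR => hKle _ _ (hg n) R t (h0sq n t R ht.le htR.le)
  refine hgv.WEDfun_le_of_head K hK0 (fun R t ht htR => ?_) fun R => ?_
  · refine hKle _ _ hgv R t ?_
    rw [← Real.le_sqrt dist_nonneg (mul_nonneg (by positivity) (hΛ0 _))]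
    exact hc.dist_le_of_forall (hv t ht.le) (hv 0 le_rfl) fun n =>
      Real.le_sqrt_of_sq_le (h0sq _ t R ht.le htR.le)
  · have hb := fun n => (hg (j n)).head_bound (hW (j n)) (hK0 R) (hKu (j n) R)
    have hlim : Tendsto (fun n => c (j n) + q * (∫⁻ t, tailWeight ε R t ∂expMeasure ε).toReal +
        K R * (∫⁻ t, headWeight ε R t ∂expMeasure ε).toReal) atTop
        (𝓝 (c₀ + q * (∫⁻ t, tailWeight ε R t ∂expMeasure ε).toReal +
          K R * (∫⁻ t, headWeight ε R t ∂expMeasure ε).toReal)) :=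
      ((hc₀.comp hj.tendsto_atTop).add_const _).add_const _
    refine ⟨?_, ge_of_tendsto' hlim fun n => (hb n).2⟩
    have h1 := hφ.headEnergy_le_liminf hc hε (fun n => hu (j n)) hv
      (fun t ht => ⟨_, fun n k => hbd t t t _ _ ht le_rfl ht le_rfl⟩) hmv.1 (K R) R
    refine h1.trans ?_
    rw [← ((ENNReal.continuous_ofReal.tendsto _).comp hlim).liminf_eq]
    exact liminf_le_liminf (Eventually.of_forall fun n => (hb n).1)

end
end WED

namespace WED

/-! ### The value function -/

lemma Veps_le {X : Type*} [MetricSpace X] {φ : X → EReal} {ε : ℝ} {x : X} {u : ℝ → X} {m : ℝ → ℝ}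
    (h : Admissible ε x u m) : Veps φ ε x ≤ WEDfun φ ε u m :=
  iInf_le (fun p : {p : (ℝ → X) × (ℝ → ℝ) // Admissible ε x p.1 p.2} => WEDfun φ ε p.1.1 p.1.2)
    ⟨(u, m), h⟩

lemma exists_admissible_lt {X : Type*} [MetricSpace X] {φ : X → EReal} {ε : ℝ} {x : X} {c : EReal}
    (h : Veps φ ε x < c) : ∃ (u : ℝ → X) (m : ℝ → ℝ), Admissible ε x u m ∧ WEDfun φ ε u m < c := by
  obtain ⟨⟨⟨u, m⟩, hp⟩, hlt⟩ := iInf_lt_iff.1 h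
  exact ⟨u, m, hp, hlt⟩

lemma epos_sub_epos_neg (z : EReal) : ((epos z : ℝ≥0∞) : EReal) - ((epos (-z) : ℝ≥0∞) : EReal) = z := by
  induction z with
  | bot => simp [epos]
  | top => simp [epos]
  | coe r =>
    rw [← EReal.coe_neg, epos_coe, epos_coe, EReal.coe_ennreal_ofReal, EReal.coe_ennreal_ofReal,
      ← EReal.coe_sub, EReal.coe_eq_coe_iff]
    rcases le_total 0 r with h | h
    · rw [max_eq_left h, max_eq_right (by linarith), sub_zero]
    · rw [max_eq_right h, max_eq_left (by linarith), zero_sub, neg_neg]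

lemma admissible_const {X : Type*} [MetricSpace X] (ε : ℝ) (x : X) :
    Admissible ε x (fun _ => x) (fun _ => 0) := by
  refine ⟨rfl, ⟨⟨fun _ => le_rfl, fun _ _ _ _ => by simp, fun _ _ _ _ _ => by simp, ?_⟩,
    fun _ _ _ _ => by simp⟩, by simp⟩
  filter_upwards with t
  simpa using tendsto_const_nhds

/-- The constant curve is a competitor with energy `φ x`. -/
lemma Veps_le_self {X : Type*} [MetricSpace X] {φ : X → EReal} {ε : ℝ} (hε : 0 < ε) (x : X) :
    Veps φ ε x ≤ φ x := by
  have := isProbabilityMeasure_expMeasure hε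
  refine (Veps_le (admissible_const ε x)).trans_eq ?_
  simp [WEDfun, eIntegral, wedIntegrand, epos_sub_epos_neg]

section

variable {X : Type*} [MetricSpace X] {σ : TopologicalSpace X} {φ : X → EReal} {ustar : X}
  {A B ε : ℝ}

lemma LSCC.neg_le_Veps (hφ : LSCC σ φ ustar A B) (hc : Compatible σ) (hε : 0 < ε)
    (hεB : B ≤ 1 / (16 * ε)) (x : X) :
    ((-(A + B * dist x ustar ^ 2) : ℝ) : EReal) ≤ Veps φ ε x := by
  refine le_iInf fun p => ?_
  rw [add_comm A]
  exact (hφ.goodCurve hc hε hεB p.2 le_rfl).neg_le_WEDfun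

lemma LSCC.Veps_le_liminf [CompleteSpace X] (hφ : LSCC σ φ ustar A B) (hc : Compatible σ)
    (hε : 0 < ε) (hεB : B ≤ 1 / (16 * ε)) (x : X) (xs : ℕ → X)
    (hbd : ∃ C : ℝ, ∀ n k, dist (xs n) (xs k) ≤ C) (hx : Tendsto xs atTop (@nhds X σ x)) :
    Veps φ ε x ≤ liminf (fun n => Veps φ ε (xs n)) atTop := by
  by_contra! hlt
  obtain ⟨c, hc1, hc2⟩ := EReal.lt_iff_exists_real_btwn.1 hlt
  obtain ⟨j, hj, hjc⟩ := extraction_of_frequently_atTop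
    (frequently_lt_of_liminf_lt (by isBoundedDefault) hc1)
  choose u m hadm hW using fun n => exists_admissible_lt (hjc n)
  obtain ⟨C, hC⟩ := hbd
  obtain ⟨i, v, mv, hi, hv, hadmv, hWv⟩ := hφ.compactness hc hε hεB ⟨C, fun n k => hC _ _⟩ hadm
    (c := fun _ => c) tendsto_const_nhds fun n => (hW n).le
  have e : v 0 = x := hc.unique hv (hx.comp (hj.tendsto_atTop.comp hi.tendsto_atTop))
  rw [e] at hadmv
  exact absurd ((Veps_le hadmv).trans hWv) (not_le.2 hc2)

lemma LSCC.exists_minimizer [CompleteSpace X] (hφ : LSCC σ φ ustar A B) (hc : Compatible σ)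
    (hε : 0 < ε) (hεB : B ≤ 1 / (16 * ε)) (x : X) (hx : Veps φ ε x ≠ ⊤) :
    ∃ (u : ℝ → X) (m : ℝ → ℝ), IsMinimizer φ ε x u m ∧ WEDfun φ ε u m = Veps φ ε x := by
  have hbot : Veps φ ε x ≠ ⊥ := fun h => by
    have := hφ.neg_le_Veps hc hε hεB x
    rw [h] at this
    exact EReal.coe_ne_bot _ (le_bot_iff.1 this)
  obtain ⟨r, hr⟩ : ∃ r : ℝ, Veps φ ε x = r := ⟨_, (EReal.coe_toReal hx hbot).symm⟩
  choose u m hadm hW using fun n : ℕ =>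
    exists_admissible_lt (φ := φ) (ε := ε) (x := x) (c := ((r + 1 / ((n:ℝ) + 1) : ℝ) : EReal)) (by
      rw [hr, EReal.coe_lt_coe_iff]
      have : 0 < 1 / ((n:ℝ) + 1) := by positivity
      linarith)
  have hlim : Tendsto (fun n : ℕ => r + 1 / ((n:ℝ) + 1)) atTop (𝓝 r) := by
    simpa using (tendsto_one_div_add_atTop_nhds_zero_nat (𝕜 := ℝ)).const_add r
  obtain ⟨j, v, mv, _, hv, hadmv, hWv⟩ := hφ.compactness hc hε hεB (x := fun _ => x)
    ⟨0, fun _ _ => by simp⟩ hadm hlim fun n => (hW n).le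
  have e : v 0 = x := hc.unique hv tendsto_const_nhds
  rw [e] at hadmv
  have hle : WEDfun φ ε v mv ≤ Veps φ ε x := by rw [hr]; exact hWv
  exact ⟨v, mv, ⟨hadmv, fun w n hw => hle.trans (Veps_le hw)⟩, le_antisymm hle (Veps_le hadmv)⟩

/-- The value function inherits the LSCC property; the triangle inequality turns the lower bound
`-A - B d²(u,u_*)` into the coercivity estimate with `2 * B` in place of `B`. -/
lemma LSCC.Veps_lscc [CompleteSpace X] (hφ : LSCC σ φ ustar A B) (hc : Compatible σ)
    (hε : 0 < ε) (hεB : B ≤ 1 / (16 * ε)) : LSCC σ (Veps φ ε) ustar A (2 * B) where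
  hA := hφ.hA
  hB := by linarith [hφ.hB]
  proper := by
    obtain ⟨x, hx⟩ := hφ.proper
    exact ⟨x, ne_top_of_le_ne_top hx (Veps_le_self hε x)⟩
  ne_bot x h := by
    have := hφ.neg_le_Veps hc hε hεB x
    rw [h] at this
    exact EReal.coe_ne_bot _ (le_bot_iff.1 this)
  lsc u x hbd hx := hφ.Veps_le_liminf hc hε hεB x u hbd hx
  cpt u := by
    rintro ⟨C, hC⟩ hbd
    choose w m hadm hW using fun n => exists_admissible_lt (φ := φ) (ε := ε) (x := u n)
      (c := ((C + 1 : ℝ) : EReal))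
      ((hC n).trans_lt (EReal.coe_lt_coe_iff.2 (by linarith)))
    obtain ⟨j, v, mv, hj, hv, _, _⟩ := hφ.compactness hc hε hεB hbd hadm
      (c := fun _ => C + 1) tendsto_const_nhds fun n => (hW n).le
    exact ⟨v 0, j, hj, hv⟩
  coercive u v := by
    refine le_trans (EReal.coe_le_coe_iff.2 ?_) (hφ.neg_le_Veps hc hε hεB u)
    have h1 : dist u ustar ^ 2 ≤ 2 * dist u v ^ 2 + 2 * dist v ustar ^ 2 := by
      have h2 := dist_triangle u v ustar
      have h3 : dist u ustar ^ 2 ≤ (dist u v + dist v ustar) ^ 2 := by gcongr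
      nlinarith [sq_nonneg (dist u v - dist v ustar)]
    nlinarith [mul_le_mul_of_nonneg_left h1 hφ.hB]

end
end WED

namespace WED

/-- Lemma 4.1: under the LSCC assumptions and `1/(16ε) ≥ B`, the infimum
defining `V_ε` is attained on its domain, `V_ε` itself satisfies the LSCC assumptions (in
particular it is σ-sequentially lower semicontinuous on `d`-bounded sets), and
`φ(x) ≥ V_ε(x) ≥ -Q(x) = -A - B d²(x,u_*)` for every `x`. -/
theorem statement9
    {X : Type*} [MetricSpace X] [CompleteSpace X]
    (σ : TopologicalSpace X) (hcomp : Compatible σ)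
    (φ : X → EReal) (ustar : X) (A B : ℝ) (hφ : LSCC σ φ ustar A B)
    (ε : ℝ) (hε : 0 < ε) (hεB : B ≤ 1 / (16 * ε)) :
    (∀ x : X, Veps φ ε x ≠ ⊤ → ∃ (u : ℝ → X) (m : ℝ → ℝ),
      IsMinimizer φ ε x u m ∧ WEDfun φ ε u m = Veps φ ε x) ∧
    (∃ A' B' : ℝ, LSCC σ (Veps φ ε) ustar A' B') ∧
    (∀ (x : X) (xs : ℕ → X), (∃ C : ℝ, ∀ n k, dist (xs n) (xs k) ≤ C) →
      Tendsto xs atTop (@nhds X σ x) →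
      Veps φ ε x ≤ Filter.liminf (fun n => Veps φ ε (xs n)) atTop) ∧
    (∀ x : X, Veps φ ε x ≤ φ x ∧
      ((-(A + B * dist x ustar ^ 2) : ℝ) : EReal) ≤ Veps φ ε x) := by
  exact ⟨fun x hx => hφ.exists_minimizer hcomp hε hεB x hx,
    ⟨A, 2 * B, hφ.Veps_lscc hcomp hε hεB⟩,
    fun x xs hbd hx => hφ.Veps_le_liminf hcomp hε hεB x xs hbd hx,
    fun x => ⟨Veps_le_self hε x, hφ.neg_le_Veps hcomp hε hεB x⟩⟩

end WED
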